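/- arXiv:math/0608422 — 7 statements merged into one kernel-verified Lean document; each statement's English description precedes it below -/
import Mathlib

section
/- For every n ≥ 1 and every partition τ of {1,…,n}, there exists a family of integers (α_σ), indexed by the noncrossing partitions σ of {1,…,n}, such that for every partition ρ of {1,…,n} one has ⟨ρ,τ⟩ₜ = Σ_σ α_σ · ⟨ρ,σ⟩ₜ, the sum running over all noncrossing partitions σ of {1,…,n}. -/
/-!
Every partition is rewritten into noncrossing ones by the six-term relation
`AC|BD = A|BCD + B|ACD + C|ABD + D|ABC - AB|CD - AD|BC`,
valid for nonempty blocks `A, B, C, D` in the presence of arbitrary further blocks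
(`bform_relation`). To see it, fix `ρ` and keep `A, B, C, D` separate: since every term has the same
number of parts, the condition on the numbers of parts is common to all terms, and if it holds then
`ρ` together with the split partition has at least three connected components (`parts_add_le`).
If each component contains one of the four blocks, then either all four blocks are in different
components and every term vanishes, or exactly two of them share a component and a term is 1 iff it
separates these two. The relation then becomes a finite check (`joinInd_relation`).

Crossings `a < b < c < d` are ordered lexicographically by `(d, c)`. At the first crossing `(k, c)`,
let `A` and `C` be the parts of the class of `c` left of `c` and from `c` on, and `B` and `D` the
parts of the class of `k` left of `k` and from `k` on. Minimality forces `A < B < C` below `k` and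
prevents every other block from separating these sets, so in each of the six partitions on the right
the first crossing comes strictly later (`FirstCrossing.noncrossing_of_resolution`). Induction on
the position of the first crossing finishes the proof.
-/

/-!
STATEMENT 0: For every n ≥ 1 and every partition τ of {1,…,n}, there exists a family of
integers (α_σ), indexed by the noncrossing partitions σ of {1,…,n}, such that for every
partition ρ of {1,…,n}: ⟨ρ,τ⟩ₜ = Σ_σ α_σ · ⟨ρ,σ⟩ₜ, summed over noncrossing partitions σ.

Partitions of {1,…,n} are modelled as `Setoid (Fin n)`; the number of parts is
`Nat.card (Quotient ρ)`, and the join ρ ∨ π is the lattice join `ρ ⊔ π` of setoids.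
-/

instance setoidFinite {m : ℕ} : Finite (Setoid (Fin m)) :=
  Finite.of_injective (fun s : Setoid (Fin m) => s.r)
    (fun s t h => by cases s; cases t; simp only at h; subst h; rfl)

noncomputable instance {m : ℕ} : Fintype (Setoid (Fin m)) := Fintype.ofFinite _

-- The bilinear form ⟨ρ,π⟩ₜ : it is 1 if (number of parts of ρ) + (number of parts of π)
-- equals m + 1 and the join of ρ and π is the one-part partition, and 0 otherwise.
open Classical in
noncomputable def bform {m : ℕ} (ρ π : Setoid (Fin m)) : ℤ :=
  if Nat.card (Quotient ρ) + Nat.card (Quotient π) = m + 1 ∧ ρ ⊔ π = ⊤ then 1 else 0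

/-- A partition σ of {1,…,m} is noncrossing (planar) if there are no a < b < c < d with
a,c in one part of σ and b,d in another part. -/
def IsNoncrossing {m : ℕ} (σ : Setoid (Fin m)) : Prop :=
  ¬ ∃ a b c d : Fin m, a < b ∧ b < c ∧ c < d ∧ σ a c ∧ σ b d ∧ ¬ σ a b

/-! ### Joins of partitions and two-colourings -/

/-- The graph with the parts of `ρ` and `σ` as vertices and the `n` points as edges has at least
(vertices − edges) components. The proof is the dimension formula for the spaces of `ρ`-invariant
and `σ`-invariant functions, whose intersection is the space of `ρ ⊔ σ`-invariant functions. -/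
theorem parts_add_le {n : ℕ} (ρ σ : Setoid (Fin n)) :
    Nat.card (Quotient ρ) + Nat.card (Quotient σ) ≤ n + Nat.card (Quotient (ρ ⊔ σ)) := by
  classical
  let F : (θ : Setoid (Fin n)) → (Quotient θ → ℚ) →ₗ[ℚ] (Fin n → ℚ) :=
    fun θ => LinearMap.funLeft ℚ ℚ (Quotient.mk θ)
  have hF : ∀ θ, Function.Injective (F θ) := fun θ =>
    LinearMap.funLeft_injective_of_surjective ℚ ℚ _ Quotient.mk_surjective
  have hr : ∀ θ, Module.finrank ℚ (LinearMap.range (F θ)) = Nat.card (Quotient θ) := fun θ => by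
    rw [LinearMap.finrank_range_of_inj (hF θ)]
    simp [Nat.card_eq_fintype_card]
  have h := Submodule.finrank_sup_add_finrank_inf_eq (LinearMap.range (F ρ)) (LinearMap.range (F σ))
  rw [hr, hr] at h
  have h1 := Submodule.finrank_le (LinearMap.range (F ρ) ⊔ LinearMap.range (F σ))
  have h2 : LinearMap.range (F ρ) ⊓ LinearMap.range (F σ) ≤ LinearMap.range (F (ρ ⊔ σ)) := by
    rintro f ⟨⟨g, hg⟩, ⟨g', hg'⟩⟩
    have hle : ρ ⊔ σ ≤ Setoid.ker f := by
      refine sup_le ?_ ?_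
      · intro x y hxy
        rw [Setoid.ker_def, ← hg]
        exact congrArg g (Quotient.sound hxy)
      · intro x y hxy
        rw [Setoid.ker_def, ← hg']
        exact congrArg g' (Quotient.sound hxy)
    refine ⟨Quotient.lift f (fun x y h => hle h), ?_⟩
    ext x
    rfl
  have h3 := Submodule.finrank_mono h2
  rw [hr] at h3
  simp at h1
  omega

/-- Four marked points `e i` of `Q` are identified according to the blocks of `π`; the result is a
single point. This is encoded by two-colourings: every `s : Q → Bool` compatible with the
identifications is constant. -/
def Joins {Q : Type*} (e : Fin 4 → Q) (π : Fin 4 → Fin 2) : Prop :=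
  ∀ s : Q → Bool, (∀ i j, π i = π j → s (e i) = s (e j)) → ∀ x y, s x = s y

/-- The join of `ρ` and `σ` is the one-part partition iff every two-colouring invariant under both
is constant. -/
theorem sup_eq_top_iff {n : ℕ} (ρ σ : Setoid (Fin n)) :
    ρ ⊔ σ = ⊤ ↔ ∀ s : Fin n → Bool, ρ ≤ Setoid.ker s → σ ≤ Setoid.ker s → ∀ x y, s x = s y := by
  classical
  constructor
  · intro h s h1 h2 x y
    have : (⊤ : Setoid (Fin n)) ≤ Setoid.ker s := h ▸ sup_le h1 h2
    exact this (x := x) (y := y) trivial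
  · intro h
    rw [eq_top_iff]
    intro x y _
    have := h (fun z => decide ((ρ ⊔ σ) x z)) ?_ ?_ x y
    · simpa [(ρ ⊔ σ).refl x] using this
    · intro z w hzw
      have hzw : (ρ ⊔ σ) z w := (le_sup_left : ρ ≤ ρ ⊔ σ) hzw
      simp only [Setoid.ker_def, decide_eq_decide]
      exact ⟨fun h => (ρ ⊔ σ).trans h hzw, fun h => (ρ ⊔ σ).trans h ((ρ ⊔ σ).symm hzw)⟩
    · intro z w hzw
      have hzw : (ρ ⊔ σ) z w := (le_sup_right : σ ≤ ρ ⊔ σ) hzw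
      simp only [Setoid.ker_def, decide_eq_decide]
      exact ⟨fun h => (ρ ⊔ σ).trans h hzw, fun h => (ρ ⊔ σ).trans h ((ρ ⊔ σ).symm hzw)⟩

/-- A labelling `l` splits the points into four special blocks (labels in `Fin 4`) and further
blocks (labels in `R`). `glue l π` is the partition obtained by merging the special blocks with the
same value of `π`. -/
def glue {n : ℕ} {R : Type*} (l : Fin n → Fin 4 ⊕ R) (π : Fin 4 → Fin 2) : Setoid (Fin n) :=
  Setoid.ker fun x => Sum.map π id (l x)

theorem glue_iff {n : ℕ} {R : Type*} {l : Fin n → Fin 4 ⊕ R} {π : Fin 4 → Fin 2} {x y : Fin n} :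
    glue l π x y ↔ Sum.map π id (l x) = Sum.map π id (l y) := Iff.rfl

/-- Whether `ρ` and the glued partition have join `⊤` depends only on how the four special blocks
are distributed among the classes of `ρ ⊔ ker l`. -/
theorem glue_joins {n : ℕ} {R : Type*} {l : Fin n → Fin 4 ⊕ R}
    (p : Fin 4 → Fin n) (hp : ∀ i, l (p i) = Sum.inl i)
    (ρ : Setoid (Fin n)) (π : Fin 4 → Fin 2) :
    ρ ⊔ glue l π = ⊤ ↔ Joins (fun i => (Quotient.mk (ρ ⊔ Setoid.ker l) (p i))) π := by
  rw [sup_eq_top_iff]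
  constructor
  · intro h s hs x y
    induction x using Quotient.ind with | _ x
    induction y using Quotient.ind with | _ y
    have key : ∀ z w, (ρ ⊔ Setoid.ker l) z w →
      s (Quotient.mk (ρ ⊔ Setoid.ker l) z) = s (Quotient.mk _ w) :=
        fun z w hzw => congrArg s (Quotient.sound hzw)
    have keyl : ∀ z w, l z = l w →
      s (Quotient.mk (ρ ⊔ Setoid.ker l) z) = s (Quotient.mk _ w) :=
        fun z w hzw => key z w ((le_sup_right : Setoid.ker l ≤ ρ ⊔ Setoid.ker l) hzw)
    refine h (fun z => s (Quotient.mk _ z)) ?_ ?_ x y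
    · intro z w hzw
      exact key z w ((le_sup_left : ρ ≤ ρ ⊔ Setoid.ker l) hzw)
    · intro z w hzw
      simp only [glue_iff, Setoid.ker_def] at hzw ⊢
      rcases hz : l z with i | r <;> rcases hw : l w with j | r' <;>
        simp only [hz, hw, Sum.map_inl, Sum.map_inr, id, Sum.inl.injEq, Sum.inr.injEq,
          reduceCtorEq] at hzw
      · rw [keyl z (p i) (by rw [hz, hp]), keyl w (p j) (by rw [hw, hp])]
        exact hs i j hzw
      · exact keyl z w (by rw [hz, hw, hzw])
  · intro h s h1 h2 x y
    have hk : Setoid.ker l ≤ Setoid.ker s := fun z w hzw =>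
      h2 (by simp only [glue_iff, Setoid.ker_def] at hzw ⊢; rw [hzw])
    refine h (Quotient.lift s fun z w hzw => (sup_le h1 hk) hzw) ?_ (Quotient.mk _ x)
      (Quotient.mk _ y)
    intro i j hij
    exact h2 (by simp only [glue_iff, hp, Sum.map_inl, hij])

/-! ### The six-term relation -/

instance decidableJoins {Q : Type*} [Fintype Q] [DecidableEq Q] (e : Fin 4 → Q) (π : Fin 4 → Fin 2) :
    Decidable (Joins e π) := by
  unfold Joins
  infer_instance

theorem joins_equiv {Q Q' : Type*} (g : Q ≃ Q') (e : Fin 4 → Q) (π : Fin 4 → Fin 2) :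
    Joins (fun i => g (e i)) π ↔ Joins e π := by
  constructor
  · intro h s hs x y
    simpa using h (fun q => s (g.symm q)) (by simpa using hs) (g x) (g y)
  · intro h s hs x y
    simpa using h (fun q => s (g q)) hs (g.symm x) (g.symm y)

theorem joins_surjective {Q : Type*} {e : Fin 4 → Q} {π : Fin 4 → Fin 2} (h : Joins e π) :
    Function.Surjective e := by
  classical
  intro q
  by_contra hq
  push Not at hq
  have := h (fun x => decide (x = q)) (by simp [hq]) q (e 0)
  simp [hq] at this

open Classical in
/-- The indicator of `Joins e π`. -/
noncomputable def joinInd {Q : Type*} (e : Fin 4 → Q) (π : Fin 4 → Fin 2) : ℤ :=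
  if Joins e π then 1 else 0

theorem joins_fin_three : ∀ e : Fin 4 → Fin 3,
    (if Joins e ![0, 1, 0, 1] then 1 else 0 : ℤ) =
      (if Joins e ![1, 0, 0, 0] then 1 else 0) + (if Joins e ![0, 1, 0, 0] then 1 else 0)
      + (if Joins e ![0, 0, 1, 0] then 1 else 0) + (if Joins e ![0, 0, 0, 1] then 1 else 0)
      - (if Joins e ![0, 0, 1, 1] then 1 else 0) - (if Joins e ![0, 1, 1, 0] then 1 else 0) := by
  decide +kernel

/-- The crossing relation `13|24 = 1|234 + 2|134 + 3|124 + 4|123 - 12|34 - 14|23` at the level of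
four marked points. Nothing is joined unless the marked points meet every class, so `Q` has three
or four elements; with four of them no gluing into two blocks can join everything. -/
theorem joinInd_relation {Q : Type*} [Finite Q] (hQ : 3 ≤ Nat.card Q) (e : Fin 4 → Q) :
    joinInd e ![0, 1, 0, 1] =
      joinInd e ![1, 0, 0, 0] + joinInd e ![0, 1, 0, 0] + joinInd e ![0, 0, 1, 0]
      + joinInd e ![0, 0, 0, 1] - joinInd e ![0, 0, 1, 1] - joinInd e ![0, 1, 1, 0] := by
  classical
  by_cases he : Function.Surjective e
  · have h4 : Nat.card Q ≤ 4 := by simpa using Nat.card_le_card_of_surjective e he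
    obtain h | h : Nat.card Q = 3 ∨ Nat.card Q = 4 := by omega
    · have g := Finite.equivFinOfCardEq h
      have := joins_fin_three (fun i => g (e i))
      simp only [joins_equiv] at this
      unfold joinInd
      convert this
    · have hb : Function.Bijective e :=
        (Nat.bijective_iff_surjective_and_card e).2 ⟨he, by simp [h]⟩
      have key : ∀ π, Joins e π ↔ Joins (id : Fin 4 → Fin 4) π :=
        fun π => joins_equiv (Equiv.ofBijective e hb) id π
      have hn : ∀ π : Fin 4 → Fin 2, Function.Surjective π →
          ¬ Joins (id : Fin 4 → Fin 4) π := by decide +kernel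
      have hz : ∀ π : Fin 4 → Fin 2, Function.Surjective π → joinInd e π = 0 :=
        fun π hπ => by simp [joinInd, key, hn π hπ]
      rw [hz _ (by decide), hz _ (by decide), hz _ (by decide), hz _ (by decide),
        hz _ (by decide), hz _ (by decide), hz _ (by decide)]
      simp
  · simp [joinInd, fun π => mt (joins_surjective (e := e) (π := π)) he]

theorem card_glue {n : ℕ} {R : Type*} [Finite R] {l : Fin n → Fin 4 ⊕ R}
    (hl : Function.Surjective l) {π : Fin 4 → Fin 2} (hπ : Function.Surjective π) :
    Nat.card (Quotient (glue l π)) = 2 + Nat.card R := by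
  have hs : Function.Surjective fun x => Sum.map π id (l x) :=
    (Sum.map_surjective.2 ⟨hπ, Function.surjective_id⟩).comp hl
  rw [glue, Nat.card_congr (Setoid.quotientKerEquivOfSurjective _ hs), Nat.card_sum]
  simp

/-- The crossing relation for the form. All seven glued partitions have the same number of parts,
so the condition on the numbers of parts is common to all terms; when it holds, `parts_add_le`
gives at least three classes of `ρ ⊔ ker l`. -/
theorem bform_relation {n : ℕ} {R : Type*} [Finite R] {l : Fin n → Fin 4 ⊕ R}
    (hl : Function.Surjective l) (ρ : Setoid (Fin n)) :
    bform ρ (glue l ![0, 1, 0, 1]) =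
      bform ρ (glue l ![1, 0, 0, 0]) + bform ρ (glue l ![0, 1, 0, 0])
      + bform ρ (glue l ![0, 0, 1, 0]) + bform ρ (glue l ![0, 0, 0, 1])
      - bform ρ (glue l ![0, 0, 1, 1]) - bform ρ (glue l ![0, 1, 1, 0]) := by
  classical
  choose p hp using fun i : Fin 4 => hl (Sum.inl i)
  have hb : ∀ π : Fin 4 → Fin 2, Function.Surjective π → bform ρ (glue l π) =
      if Nat.card (Quotient ρ) + (2 + Nat.card R) = n + 1 then
        joinInd (fun i => Quotient.mk (ρ ⊔ Setoid.ker l) (p i)) π else 0 := by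
    intro π hπ
    rw [bform, card_glue hl hπ, glue_joins p hp, joinInd]
    split_ifs <;> tauto
  rw [hb _ (by decide), hb _ (by decide), hb _ (by decide), hb _ (by decide), hb _ (by decide),
    hb _ (by decide), hb _ (by decide)]
  split_ifs with hcard
  · apply joinInd_relation
    have h1 := parts_add_le ρ (Setoid.ker l)
    rw [Nat.card_congr (Setoid.quotientKerEquivOfSurjective _ hl), Nat.card_sum] at h1
    simp only [Nat.card_eq_fintype_card, Fintype.card_fin] at h1
    simp only [Nat.card_eq_fintype_card] at hcard ⊢
    omega
  · simp

/-! ### Resolving the first crossing -/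

/-- There is no crossing `a < b < c < d` for which `(d, c)` is lexicographically below `(k, m)`. -/
def NoncrossingUpTo {n : ℕ} (k m : ℕ) (σ : Setoid (Fin n)) : Prop :=
  ∀ a b c d : Fin n, a < b → b < c → c < d → σ a c → σ b d →
    (d.val < k ∨ d.val = k ∧ c.val < m) → σ a b

/-- The situation at the lexicographically first crossing `(k, c)` of `τ`. The class of `c` consists
of its elements left of `c` and those from `c` on; the class of `k` consists of its elements left of
`k` and those from `k` on. Below `k` the partition is noncrossing, and the class of `k` lies
strictly between the two halves of the class of `c`. -/
structure FirstCrossing {n : ℕ} (τ : Setoid (Fin n)) (c k : Fin n) : Prop where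
  lt : c < k
  not_rel : ¬ τ c k
  noncrossing : ∀ a b c d, a < b → b < c → c < d → τ a c → τ b d → d < k → τ a b
  minimal : ∀ a b x, a < b → b < x → x < c → τ a x → τ b k → τ a b
  left_lt : ∀ x y, τ x c → x < c → τ y k → y < k → x < y
  lt_right : ∀ y, τ y k → y < k → y < c
  exists_left : ∃ a, τ a c ∧ a < c
  exists_mid : ∃ b, τ b k ∧ b < k

theorem FirstCrossing.of_crossing {n : ℕ} {τ : Setoid (Fin n)} {a b c k : Fin n} (hab : a < b)
    (hbc : b < c) (hck : c < k) (hac : τ a c) (hbk : τ b k) (hnab : ¬ τ a b)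
    (h : NoncrossingUpTo k c τ) : FirstCrossing τ c k := by
  have hs : ∀ x y, τ x y → τ y x := fun x y => τ.symm
  have ht : ∀ x y z, τ x y → τ y z → τ x z := fun x y z => τ.trans
  have hnc : ∀ a b c d, a < b → b < c → c < d → τ a c → τ b d → d < k → τ a b :=
    fun a b c d h1 h2 h3 h4 h5 h6 => h a b c d h1 h2 h3 h4 h5 (Or.inl h6)
  have hmin : ∀ a b x, a < b → b < x → x < c → τ a x → τ b k → τ a b :=
    fun a b x h1 h2 h3 h4 h5 => h a b x k h1 h2 (h3.trans hck) h4 h5 (Or.inr ⟨rfl, h3⟩)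
  have hnck : ¬ τ c k := by grind
  refine ⟨hck, hnck, hnc, hmin, ?_, ?_, ⟨a, hac, hab.trans hbc⟩, ⟨b, hbk, hbc.trans hck⟩⟩
  · intro x y hx hxc hy hyk
    have := hnc y a b c
    have := hmin a y x
    grind
  · intro y hy hyk
    have := hnc a b c y
    grind

/-- Below `k`, a block other than those of `c` and `k` does not separate points of these two
blocks: if one of the points lies under an arc `u < v` of the block, then all of them do. The reason
is that `c` itself then lies under the arc. -/
theorem FirstCrossing.arc {n : ℕ} {τ : Setoid (Fin n)} {c k : Fin n} (h : FirstCrossing τ c k)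
    (u v s t : Fin n) (huv : τ u v) (huc : ¬ τ u c) (huk : ¬ τ u k) (hus : u < s) (hsv : s < v)
    (hvk : v < k) (hs : τ s c ∨ τ s k) (ht : τ t c ∨ τ t k) (htk : t < k) : u < t ∧ t < v := by
  have hsym : ∀ x y, τ x y → τ y x := fun x y => τ.symm
  have htr : ∀ x y z, τ x y → τ y z → τ x z := fun x y z => τ.trans
  obtain ⟨hck, hnck, hnc, hmin, hAB, hBC, ⟨a, ha, hac⟩, -⟩ := h
  have hcarc : u < c ∧ c < v := by
    rcases hs with h | h
    · have := hnc c u s v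
      have := hnc u s v c
      grind
    · have := hBC s h
      have := hmin u s v
      grind
  rcases ht with h | h
  · have := hnc t u c v
    have := hnc u c v t
    grind
  · have := hAB a t ha hac h htk
    have := hBC t h htk
    have := hnc a u c v
    grind

open Classical in
/-- The special block of a point `x` in the class of `c` or of `k`: block 0 is the part of the class
of `c` left of `c` and block 2 the rest of it, block 1 is the part of the class of `k` left of `k`
and block 3 the rest of it. The value is meaningless for other points. -/
noncomputable def colour {n : ℕ} (τ : Setoid (Fin n)) (c k x : Fin n) : Fin 4 :=
  if τ x c then if x < c then 0 else 2 else if x < k then 1 else 3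

open Classical in
theorem apply_colour {n : ℕ} (τ : Setoid (Fin n)) (c k x : Fin n) (π : Fin 4 → Fin 2) :
    π (colour τ c k x) =
      if τ x c then if x < c then π 0 else π 2 else if x < k then π 1 else π 3 := by
  unfold colour
  split_ifs <;> rfl

/-- A labelling that splits the classes of `c` and `k` into four blocks by `colour` and keeps the
other classes, with an explicit description of the glued partitions. -/
theorem FirstCrossing.exists_label {n : ℕ} {τ : Setoid (Fin n)} {c k : Fin n}
    (h : FirstCrossing τ c k) :
    ∃ (R : Type) (_ : Finite R) (l : Fin n → Fin 4 ⊕ R), Function.Surjective l ∧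
      ∀ (π : Fin 4 → Fin 2) (x y : Fin n), glue l π x y ↔
        (τ x y ∧ ¬ τ x c ∧ ¬ τ x k) ∨ ((τ x c ∨ τ x k) ∧ (τ y c ∨ τ y k) ∧
          π (colour τ c k x) = π (colour τ c k y)) := by
  have hsym : ∀ x y, τ x y → τ y x := fun x y => τ.symm
  have htr : ∀ x y z, τ x y → τ y z → τ x z := fun x y z => τ.trans
  classical
  obtain ⟨hck, hnck, -, -, -, -, ⟨a, ha, hac⟩, ⟨b, hb, hbk⟩⟩ := h
  let R := {q : Quotient τ // q ≠ Quotient.mk τ c ∧ q ≠ Quotient.mk τ k}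
  let l : Fin n → Fin 4 ⊕ R := fun x =>
    if hx : τ x c ∨ τ x k then Sum.inl (colour τ c k x)
    else Sum.inr ⟨Quotient.mk τ x, fun e => hx (Or.inl (Quotient.exact e)),
      fun e => hx (Or.inr (Quotient.exact e))⟩
  have l1 : ∀ x, (τ x c ∨ τ x k) → l x = Sum.inl (colour τ c k x) := fun x hx => dif_pos hx
  refine ⟨R, inferInstance, l, ?_, ?_⟩
  · rintro (i | ⟨q, hq⟩)
    · fin_cases i
      · exact ⟨a, by rw [l1 a (Or.inl ha)]; simp [colour, ha, hac]⟩
      · refine ⟨b, ?_⟩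
        have : ¬ τ b c := by grind
        rw [l1 b (Or.inr hb)]; simp [colour, hbk, this]
      · exact ⟨c, by rw [l1 c (Or.inl (τ.refl c))]; simp [colour]⟩
      · refine ⟨k, ?_⟩
        have : ¬ τ k c := by grind
        rw [l1 k (Or.inr (τ.refl k))]; simp [colour, this]
    · induction q using Quotient.ind with | _ x
      refine ⟨x, dif_neg ?_⟩
      rintro (hx | hx)
      · exact hq.1 (Quotient.sound hx)
      · exact hq.2 (Quotient.sound hx)
  · intro π x y
    rw [glue_iff]
    by_cases hx : τ x c ∨ τ x k <;> by_cases hy : τ y c ∨ τ y k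
    · rw [l1 x hx, l1 y hy]
      simp only [Sum.map_inl, Sum.inl.injEq]
      tauto
    · rw [l1 x hx, show l y = _ from dif_neg hy]
      simp only [Sum.map_inl, Sum.map_inr, reduceCtorEq, false_iff]
      tauto
    · rw [l1 y hy, show l x = _ from dif_neg hx]
      simp only [Sum.map_inl, Sum.map_inr, reduceCtorEq, false_iff]
      grind
    · rw [show l x = _ from dif_neg hx, show l y = _ from dif_neg hy]
      simp only [Sum.map_inr, id, Sum.inr.injEq]
      rw [Subtype.ext_iff, show (Quotient.mk τ x = Quotient.mk τ y) ↔ τ x y from Quotient.eq]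
      tauto

set_option maxHeartbeats 2000000 in
/-- Each of the six resolutions of the first crossing has its own first crossing strictly later. -/
theorem FirstCrossing.noncrossing_of_resolution {n : ℕ} {τ σ : Setoid (Fin n)} {c k : Fin n}
    (h : FirstCrossing τ c k) (π : Fin 4 → Fin 2)
    (hπ : π ∈ [![1, 0, 0, 0], ![0, 1, 0, 0], ![0, 0, 1, 0], ![0, 0, 0, 1], ![0, 0, 1, 1],
      ![0, 1, 1, 0]])
    (hσ : ∀ x y : Fin n, σ x y ↔
        (τ x y ∧ ¬ τ x c ∧ ¬ τ x k) ∨ ((τ x c ∨ τ x k) ∧ (τ y c ∨ τ y k) ∧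
          π (colour τ c k x) = π (colour τ c k y))) :
    NoncrossingUpTo k (c + 1) σ := by
  have hr : ∀ x, τ x x := fun x => τ.refl x
  have hsym : ∀ x y, τ x y → τ y x := fun x y => τ.symm
  have htr : ∀ x y z, τ x y → τ y z → τ x z := fun x y z => τ.trans
  have harc := h.arc
  obtain ⟨hck, hnck, hnc, hmin, hAB, hBC, hA, hB⟩ := h
  intro w x y z hwx hxy hyz hwy hxz hz
  replace hz : z < k ∨ z = k ∧ y ≤ c := by
    simp only [Fin.lt_def, Fin.ext_iff, Fin.le_def]
    omega
  rw [hσ] at hwy hxz ⊢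
  clear hσ
  simp only [List.mem_cons, List.not_mem_nil, or_false] at hπ
  rcases hπ with rfl | rfl | rfl | rfl | rfl | rfl <;>
    simp only [apply_colour, Matrix.cons_val] at hwy hxz ⊢ <;> grind

/-! ### Reduction to noncrossing partitions -/

/-- The integer combinations of the functionals `ρ ↦ bform ρ σ` with `σ` noncrossing. -/
noncomputable def planarSpan (n : ℕ) : Submodule ℤ (Setoid (Fin n) → ℤ) :=
  Submodule.span ℤ ((fun σ ρ => bform ρ σ) '' {σ | IsNoncrossing σ})

theorem FirstCrossing.mem_planarSpan {n : ℕ} {τ : Setoid (Fin n)} {c k : Fin n}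
    (h : FirstCrossing τ c k)
    (ih : ∀ σ : Setoid (Fin n), NoncrossingUpTo k (c + 1) σ →
      (fun ρ => bform ρ σ) ∈ planarSpan n) :
    (fun ρ => bform ρ τ) ∈ planarSpan n := by
  classical
  obtain ⟨R, _, l, hl, hg⟩ := h.exists_label
  have hmem : ∀ π ∈ [![1, 0, 0, 0], ![0, 1, 0, 0], ![0, 0, 1, 0], ![0, 0, 0, 1], ![0, 0, 1, 1],
      ![0, 1, 1, 0]], (fun ρ => bform ρ (glue l π)) ∈ planarSpan n :=
    fun π hπ => ih _ (h.noncrossing_of_resolution π hπ (hg π))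
  -- Gluing block 0 to block 2 and block 1 to block 3 gives back `τ`.
  have hτ : glue l ![0, 1, 0, 1] = τ := by
    ext x y
    have hsym : ∀ x y, τ x y → τ y x := fun x y => τ.symm
    have htr : ∀ x y z, τ x y → τ y z → τ x z := fun x y z => τ.trans
    have := h.not_rel
    rw [hg]
    simp only [apply_colour, Matrix.cons_val]
    grind
  have hrel : (fun ρ => bform ρ τ) =
      (fun ρ => bform ρ (glue l ![1, 0, 0, 0])) + (fun ρ => bform ρ (glue l ![0, 1, 0, 0]))
      + (fun ρ => bform ρ (glue l ![0, 0, 1, 0])) + (fun ρ => bform ρ (glue l ![0, 0, 0, 1]))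
      - (fun ρ => bform ρ (glue l ![0, 0, 1, 1]))
      - (fun ρ => bform ρ (glue l ![0, 1, 1, 0])) := by
    funext ρ
    have := bform_relation hl ρ
    rw [hτ] at this
    simpa using this
  rw [hrel]
  exact sub_mem (sub_mem (add_mem (add_mem (add_mem (hmem _ (by simp)) (hmem _ (by simp)))
    (hmem _ (by simp))) (hmem _ (by simp))) (hmem _ (by simp))) (hmem _ (by simp))

/-- Downward lexicographic induction on the position `(k, m)` below which there is no crossing; `i`
and `j` bound the distances of `k` and `m` from `n`. -/
theorem mem_planarSpan_of_upTo {n : ℕ} (i : ℕ) : ∀ (j k m : ℕ), n ≤ k + i → n ≤ m + j →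
    ∀ τ : Setoid (Fin n), NoncrossingUpTo k m τ → (fun ρ => bform ρ τ) ∈ planarSpan n := by
  induction i with
  | zero =>
    intro j k m hk _ τ hτ
    refine Submodule.subset_span ⟨τ, ?_, rfl⟩
    rintro ⟨a, b, c, d, h1, h2, h3, h4, h5, h6⟩
    exact h6 (hτ a b c d h1 h2 h3 h4 h5 (Or.inl (by omega)))
  | succ i ihi =>
    intro j
    induction j with
    | zero =>
      intro k m hk hm τ hτ
      refine ihi n (k + 1) 0 (by omega) (by omega) τ ?_
      intro a b c d h1 h2 h3 h4 h5 h6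
      exact hτ a b c d h1 h2 h3 h4 h5 (by omega)
    | succ j ihj =>
      intro k m hk hm τ hτ
      by_cases h : NoncrossingUpTo k (m + 1) τ
      · exact ihj k (m + 1) hk (by omega) τ h
      · unfold NoncrossingUpTo at h
        push Not at h
        obtain ⟨a, b, c, d, h1, h2, h3, h4, h5, h6, h7⟩ := h
        obtain ⟨hd, hc⟩ : d.val = k ∧ c.val = m := by
          by_contra hne
          exact h7 (hτ a b c d h1 h2 h3 h4 h5 (by omega))
        subst hd hc
        exact (FirstCrossing.of_crossing h1 h2 h3 h4 h5 h7 hτ).mem_planarSpan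
          (ihj d (c + 1) hk (by omega))

open Classical in
theorem grove_projection_exists (n : ℕ) (hn : 1 ≤ n) (τ : Setoid (Fin n)) :
    ∃ α : Setoid (Fin n) → ℤ,
      ∀ ρ : Setoid (Fin n),
        bform ρ τ =
          ∑ σ ∈ Finset.univ.filter (fun σ : Setoid (Fin n) => IsNoncrossing σ),
            α σ * bform ρ σ := by
  have h : (fun ρ => bform ρ τ) ∈ planarSpan n :=
    mem_planarSpan_of_upTo n n 0 0 (by omega) (by omega) τ (fun a b c d _ _ _ _ _ h => by omega)
  have hset : {σ : Setoid (Fin n) | IsNoncrossing σ} =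
      ↑(Finset.univ.filter (fun σ : Setoid (Fin n) => IsNoncrossing σ)) := by simp
  rw [planarSpan, hset, Submodule.mem_span_image_finset_iff_exists_fun'] at h
  obtain ⟨α, hα⟩ := h
  refine ⟨α, fun ρ => ?_⟩
  rw [← congrFun hα ρ]
  simp
end

section
/- For every partition ρ of {1,2,3,4}: ⟨ρ, {{1},{2,3,4}}⟩ₜ + ⟨ρ, {{2},{1,3,4}}⟩ₜ + ⟨ρ, {{3},{1,2,4}}⟩ₜ + ⟨ρ, {{4},{1,2,3}}⟩ₜ = ⟨ρ, {{1,2},{3,4}}⟩ₜ + ⟨ρ, {{1,3},{2,4}}⟩ₜ + ⟨ρ, {{1,4},{2,3}}⟩ₜ. -/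
/-- A two-part partition is a coatom of the partition lattice: joining it with `ρ` gives the
one-part partition exactly when `ρ` relates elements of different parts. -/
lemma sup_ker_eq_top_iff (ρ : Setoid (Fin 4)) (f : Fin 4 → Bool) (hf : Function.Surjective f) :
    ρ ⊔ Setoid.ker f = ⊤ ↔ ∃ a b, ρ a b ∧ f a ≠ f b := by
  constructor
  · intro h
    by_contra! hc
    have hle : ρ ≤ Setoid.ker f := fun {a b} hab => hc a b hab
    rw [sup_eq_right.mpr hle] at h
    obtain ⟨x, hx⟩ := hf true
    obtain ⟨y, hy⟩ := hf false
    have hxy : Setoid.ker f x y := by rw [h]; trivial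
    have hxy' : f x = f y := hxy
    simp [hx, hy] at hxy'
  · rintro ⟨a, b, hab, hne⟩
    have h1 : (ρ ⊔ Setoid.ker f) a b := (le_sup_left : ρ ≤ ρ ⊔ Setoid.ker f) hab
    have h2 : ∀ x y, f x = f y → (ρ ⊔ Setoid.ker f) x y := fun x y h =>
      (le_sup_right : Setoid.ker f ≤ ρ ⊔ Setoid.ker f) h
    -- Since `f` is Boolean-valued, every element shares its part with `a` or with `b`.
    have h3 : ∀ x, (ρ ⊔ Setoid.ker f) x a := by
      intro x
      by_cases hx : f x = f a
      · exact h2 x a hx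
      · have hxb : f x = f b := by
          revert hx hne
          cases f x <;> cases f a <;> cases f b <;> simp
        exact Setoid.trans' _ (h2 x b hxb) (Setoid.symm' _ h1)
    rw [Setoid.eq_top_iff]
    exact fun x y => Setoid.trans' _ (h3 x) (Setoid.symm' _ (h3 y))

lemma card_quotient_ker (f : Fin 4 → Bool) (hf : Function.Surjective f) :
    Nat.card (Quotient (Setoid.ker f)) = 2 := by
  rw [Nat.card_congr (Setoid.quotientKerEquivOfSurjective f hf)]
  simp

/-- A partition of four points into three parts is determined by its single pair. -/
lemma exists_pair_of_card_quotient_eq_three (ρ : Setoid (Fin 4))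
    (h : Nat.card (Quotient ρ) = 3) :
    ∃ a b, a ≠ b ∧ ∀ x y, ρ x y ↔ x = y ∨ (x = a ∧ y = b) ∨ (x = b ∧ y = a) := by
  have e : Quotient ρ ≃ Fin 3 := Finite.equivFinOfCardEq h
  have key : ∀ g : Fin 4 → Fin 3, Function.Surjective g →
      ∃ a b, a ≠ b ∧ ∀ x y, g x = g y ↔ x = y ∨ (x = a ∧ y = b) ∨ (x = b ∧ y = a) := by
    intro g hg
    obtain ⟨a, b, hab, hgab⟩ := Fintype.exists_ne_map_eq_of_card_lt g (by simp)
    -- Without `b` there are three points left, still mapping onto `Fin 3`, hence injectively.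
    have hs : Function.Surjective fun x : {x : Fin 4 // x ≠ b} => g x := by
      intro c
      obtain ⟨x, rfl⟩ := hg c
      by_cases hx : x = b
      · exact ⟨⟨a, hab⟩, by rw [hx]; exact hgab⟩
      · exact ⟨⟨x, hx⟩, rfl⟩
    have hi := ((Fintype.bijective_iff_surjective_and_card _).mpr ⟨hs, by simp⟩).injective
    have hinj : ∀ x y, x ≠ b → y ≠ b → g x = g y → x = y := fun x y hx hy hxy =>
      congrArg Subtype.val (@hi ⟨x, hx⟩ ⟨y, hy⟩ hxy)
    refine ⟨a, b, hab, fun x y => ⟨fun hxy => ?_, ?_⟩⟩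
    · by_cases hx : x = b <;> by_cases hy : y = b
      · exact Or.inl (hx.trans hy.symm)
      · exact Or.inr (Or.inr ⟨hx, hinj y a hy hab (by rw [hgab, ← hxy, hx])⟩)
      · exact Or.inr (Or.inl ⟨hinj x a hx hab (by rw [hgab, hxy, hy]), hy⟩)
      · exact Or.inl (hinj x y hx hy hxy)
    · rintro (rfl | ⟨rfl, rfl⟩ | ⟨rfl, rfl⟩)
      · rfl
      · exact hgab
      · exact hgab.symm
  obtain ⟨a, b, hab, H⟩ := key (fun x => e (Quotient.mk ρ x))
    (e.surjective.comp Quotient.mk_surjective)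
  refine ⟨a, b, hab, fun x y => ?_⟩
  rw [← H x y, e.apply_eq_iff_eq]
  exact Quotient.eq.symm

lemma bform_ker_eq_zero (ρ : Setoid (Fin 4)) (h : Nat.card (Quotient ρ) ≠ 3)
    (f : Fin 4 → Bool) (hf : Function.Surjective f) : bform ρ (Setoid.ker f) = 0 := by
  unfold bform
  rw [card_quotient_ker f hf, if_neg]
  rintro ⟨h', -⟩
  omega

/-- For `ρ` with the single pair `{a, b}`, the form detects whether `f` separates `a` and `b`. -/
lemma bform_ker_eq (ρ : Setoid (Fin 4)) (h : Nat.card (Quotient ρ) = 3) (a b : Fin 4)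
    (H : ∀ x y, ρ x y ↔ x = y ∨ (x = a ∧ y = b) ∨ (x = b ∧ y = a))
    (f : Fin 4 → Bool) (hf : Function.Surjective f) :
    bform ρ (Setoid.ker f) = if f a ≠ f b then 1 else 0 := by
  unfold bform
  rw [card_quotient_ker f hf, sup_ker_eq_top_iff ρ f hf, h]
  have hiff : (∃ x y, ρ x y ∧ f x ≠ f y) ↔ f a ≠ f b := by
    constructor
    · rintro ⟨x, y, hxy, hne⟩
      rcases (H x y).mp hxy with rfl | ⟨rfl, rfl⟩ | ⟨rfl, rfl⟩
      · exact absurd rfl hne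
      · exact hne
      · exact hne.symm
    · exact fun hne => ⟨a, b, (H a b).mpr (by simp), hne⟩
  simp only [hiff, Nat.reduceAdd, true_and]

theorem four_point_crossing_identity (ρ : Setoid (Fin 4)) :
    bform ρ (Setoid.ker fun i : Fin 4 => decide (i = 0)) +
      bform ρ (Setoid.ker fun i : Fin 4 => decide (i = 1)) +
      bform ρ (Setoid.ker fun i : Fin 4 => decide (i = 2)) +
      bform ρ (Setoid.ker fun i : Fin 4 => decide (i = 3)) =
    bform ρ (Setoid.ker fun i : Fin 4 => decide ((i : ℕ) ≤ 1)) +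
      bform ρ (Setoid.ker fun i : Fin 4 => decide ((i : ℕ) % 2 = 0)) +
      bform ρ (Setoid.ker fun i : Fin 4 => decide (i = 0 ∨ i = 3)) := by
  have s0 : Function.Surjective fun i : Fin 4 => decide (i = 0) := by decide
  have s1 : Function.Surjective fun i : Fin 4 => decide (i = 1) := by decide
  have s2 : Function.Surjective fun i : Fin 4 => decide (i = 2) := by decide
  have s3 : Function.Surjective fun i : Fin 4 => decide (i = 3) := by decide
  have t1 : Function.Surjective fun i : Fin 4 => decide ((i : ℕ) ≤ 1) := by decide
  have t2 : Function.Surjective fun i : Fin 4 => decide ((i : ℕ) % 2 = 0) := by decide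
  have t3 : Function.Surjective fun i : Fin 4 => decide (i = 0 ∨ i = 3) := by decide
  by_cases h : Nat.card (Quotient ρ) = 3
  · obtain ⟨a, b, hab, H⟩ := exists_pair_of_card_quotient_eq_three ρ h
    have K := bform_ker_eq ρ h a b H
    rw [K _ s0, K _ s1, K _ s2, K _ s3, K _ t1, K _ t2, K _ t3]
    clear K H
    revert a b
    decide
  · have K := bform_ker_eq_zero ρ h
    rw [K _ s0, K _ s1, K _ s2, K _ s3, K _ t1, K _ t2, K _ t3]
    norm_num
end

section
/- Let n ≥ 2, let τ be a partition of {1,…,n−1}, and let (α_σ) be a family of integers indexed by the partitions σ of {1,…,n−1} such that for every partition ρ of {1,…,n−1}: ⟨ρ,τ⟩ₜ = Σ_σ α_σ · ⟨ρ,σ⟩ₜ. For a partition π of {1,…,n−1}, let π|n denote the partition of {1,…,n} obtained by adjoining the singleton part {n}. Then for every partition ρ of {1,…,n}: ⟨ρ, τ|n⟩ₜ = Σ_σ α_σ · ⟨ρ, σ|n⟩ₜ. -/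
/-- The partition π|n of {1,…,n} obtained from a partition π of {1,…,n−1} by adjoining
the singleton part {n}. -/
def addSingleton {m : ℕ} (π : Setoid (Fin m)) : Setoid (Fin (m + 1)) :=
  Setoid.ker (fun a : Fin (m + 1) =>
    Fin.lastCases (motive := fun _ => Option (Quotient π)) none (fun i => some (Quotient.mk π i)) a)

theorem addSingleton_castSucc {m : ℕ} (π : Setoid (Fin m)) (i j : Fin m) :
    addSingleton π i.castSucc j.castSucc ↔ π i j := by
  unfold addSingleton
  rw [Setoid.ker_def, Fin.lastCases_castSucc, Fin.lastCases_castSucc, Option.some.injEq]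
  exact Quotient.eq

theorem addSingleton_last {m : ℕ} (π : Setoid (Fin m)) (i : Fin m) :
    ¬ addSingleton π i.castSucc (Fin.last m) := by
  unfold addSingleton
  rw [Setoid.ker_def, Fin.lastCases_castSucc, Fin.lastCases_last]
  exact Option.some_ne_none _

theorem card_addSingleton {m : ℕ} (π : Setoid (Fin m)) :
    Nat.card (Quotient (addSingleton π)) = Nat.card (Quotient π) + 1 := by
  rw [← Finite.card_option]
  refine Nat.card_congr (Setoid.quotientKerEquivOfSurjective _ ?_)
  rintro (_ | q)
  · exact ⟨Fin.last m, by simp⟩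
  · induction q using Quotient.inductionOn with
    | h i => exact ⟨i.castSucc, by simp⟩

/-- Restriction preserves the number of parts when the last element is not a singleton part: every
part then meets the smaller set. -/
theorem card_comap_castSucc {m : ℕ} (ρ : Setoid (Fin (m + 1))) (j : Fin m)
    (hj : ρ j.castSucc (Fin.last m)) :
    Nat.card (Quotient (Setoid.comap Fin.castSucc ρ)) = Nat.card (Quotient ρ) := by
  refine Nat.card_congr (Equiv.ofBijective
    (Quotient.map' (s₁ := Setoid.comap Fin.castSucc ρ) (s₂ := ρ) Fin.castSucc
      (fun _ _ hab => hab)) ⟨?_, ?_⟩)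
  · intro a b
    induction a using Quotient.inductionOn
    induction b using Quotient.inductionOn
    intro hab
    exact Quotient.sound (Quotient.exact (s := ρ) hab)
  · intro q
    induction q using Quotient.inductionOn with
    | h a =>
      induction a using Fin.lastCases with
      | last => exact ⟨Quotient.mk _ j, Quotient.sound hj⟩
      | cast i => exact ⟨Quotient.mk _ i, rfl⟩

theorem sup_addSingleton_eq_top_iff {m : ℕ} (ρ : Setoid (Fin (m + 1))) (σ : Setoid (Fin m))
    (j : Fin m) (hj : ρ j.castSucc (Fin.last m)) :
    ρ ⊔ addSingleton σ = ⊤ ↔ Setoid.comap Fin.castSucc ρ ⊔ σ = ⊤ := by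
  constructor
  · intro htop
    -- The retraction sending the last element to its `ρ`-neighbour `j` maps both relations
    -- into their restrictions.
    let r : Fin (m + 1) → Fin m := fun a => Fin.lastCases (motive := fun _ => Fin m) j id a
    have hr : ∀ i : Fin m, r i.castSucc = i := fun i => by simp [r]
    have hl : r (Fin.last m) = j := by simp [r]
    have hρr : ∀ a, ρ (r a).castSucc a := by
      intro a
      induction a using Fin.lastCases with
      | last => rw [hl]; exact hj
      | cast i => rw [hr]
    have hle : ρ ⊔ addSingleton σ ≤ Setoid.comap r (Setoid.comap Fin.castSucc ρ ⊔ σ) := by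
      refine sup_le ?_ ?_
      · intro a b hab
        exact (le_sup_left : Setoid.comap Fin.castSucc ρ ≤ _)
          (ρ.trans (hρr a) (ρ.trans hab (ρ.symm (hρr b))))
      · intro a b hab
        refine (le_sup_right : σ ≤ Setoid.comap Fin.castSucc ρ ⊔ σ) ?_
        induction a using Fin.lastCases with
        | last =>
          induction b using Fin.lastCases with
          | last => exact σ.refl _
          | cast i => exact absurd ((addSingleton σ).symm hab) (addSingleton_last σ i)
        | cast i =>
          induction b using Fin.lastCases with
          | last => exact absurd hab (addSingleton_last σ i)
          | cast k => rw [hr, hr]; exact (addSingleton_castSucc σ i k).1 hab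
    rw [Setoid.eq_top_iff]
    intro x y
    have hxy : (ρ ⊔ addSingleton σ) x.castSucc y.castSucc := by rw [htop]; trivial
    have := hle hxy
    rwa [Setoid.comap_rel, hr, hr] at this
  · intro htop
    have hle : Setoid.comap Fin.castSucc ρ ⊔ σ ≤
        Setoid.comap Fin.castSucc (ρ ⊔ addSingleton σ) := by
      refine sup_le ?_ ?_
      · intro a b hab
        exact (le_sup_left : ρ ≤ ρ ⊔ addSingleton σ) hab
      · intro a b hab
        exact (le_sup_right : addSingleton σ ≤ ρ ⊔ addSingleton σ)
          ((addSingleton_castSucc σ a b).2 hab)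
    have hj' : (ρ ⊔ addSingleton σ) j.castSucc (Fin.last m) :=
      (le_sup_left : ρ ≤ ρ ⊔ addSingleton σ) hj
    have key : ∀ a, (ρ ⊔ addSingleton σ) j.castSucc a := by
      intro a
      induction a using Fin.lastCases with
      | last => exact hj'
      | cast i =>
        have hji : (Setoid.comap Fin.castSucc ρ ⊔ σ) j i := by rw [htop]; trivial
        exact hle hji
    rw [Setoid.eq_top_iff]
    intro x y
    exact Setoid.trans' _ (Setoid.symm' _ (key x)) (key y)

theorem bform_addSingleton_of_rel {m : ℕ} (ρ : Setoid (Fin (m + 1))) (σ : Setoid (Fin m))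
    (j : Fin m) (hj : ρ j.castSucc (Fin.last m)) :
    bform ρ (addSingleton σ) = bform (Setoid.comap Fin.castSucc ρ) σ := by
  unfold bform
  classical
  refine if_congr ?_ rfl rfl
  rw [sup_addSingleton_eq_top_iff ρ σ j hj, card_addSingleton, card_comap_castSucc ρ j hj,
    ← add_assoc, Nat.add_right_cancel_iff]

theorem bform_addSingleton_of_not_rel {m : ℕ} (hm : 1 ≤ m) (ρ : Setoid (Fin (m + 1)))
    (σ : Setoid (Fin m)) (hρ : ∀ j : Fin m, ¬ ρ j.castSucc (Fin.last m)) :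
    bform ρ (addSingleton σ) = 0 := by
  -- A partition having the last element as a singleton part refines the two-part partition
  -- that separates the last element from all others.
  have sep : ∀ π : Setoid (Fin (m + 1)), (∀ j : Fin m, ¬ π j.castSucc (Fin.last m)) →
      π ≤ Setoid.ker (fun a => a = Fin.last m) := by
    intro π hπ a b hab
    rw [Setoid.ker_def]
    induction a using Fin.lastCases with
    | last =>
      induction b using Fin.lastCases with
      | last => rfl
      | cast i => exact absurd (π.symm hab) (hπ i)
    | cast i =>
      induction b using Fin.lastCases with
      | last => exact absurd hab (hπ i)
      | cast k => simp
  unfold bform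
  rw [if_neg]
  rintro ⟨-, htop⟩
  have hle := sup_le (sep ρ hρ) (sep _ (addSingleton_last σ))
  rw [htop] at hle
  have h0 : (⊤ : Setoid (Fin (m + 1))) (Fin.castSucc ⟨0, hm⟩) (Fin.last m) := trivial
  have := hle h0
  rw [Setoid.ker_def] at this
  have hm0 : m = 0 := by simpa using this
  omega

theorem adjoin_singleton_equivalence (m : ℕ) (hm : 1 ≤ m) (τ : Setoid (Fin m))
    (α : Setoid (Fin m) → ℤ)
    (h : ∀ ρ : Setoid (Fin m), bform ρ τ = ∑ σ : Setoid (Fin m), α σ * bform ρ σ) :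
    ∀ ρ : Setoid (Fin (m + 1)),
      bform ρ (addSingleton τ) =
        ∑ σ : Setoid (Fin m), α σ * bform ρ (addSingleton σ) := by
  intro ρ
  by_cases hρ : ∃ j : Fin m, ρ j.castSucc (Fin.last m)
  · obtain ⟨j, hj⟩ := hρ
    simp only [fun σ => bform_addSingleton_of_rel ρ σ j hj]
    exact h _
  · push Not at hρ
    simp [fun σ => bform_addSingleton_of_not_rel hm ρ σ hρ]
end

section
/- Let n ≥ 2, let j ∈ {1,…,n−1}, let τ be a partition of {1,…,n−1}, and let (α_σ) be a family of integers indexed by the partitions σ of {1,…,n−1} such that for every partition ρ of {1,…,n−1}: ⟨ρ,τ⟩ₜ = Σ_σ α_σ · ⟨ρ,σ⟩ₜ. For a partition π of {1,…,n−1}, let ins_j(π) denote the partition of {1,…,n} obtained by inserting the new element n into the part of π containing j. Then for every partition ρ of {1,…,n}: ⟨ρ, ins_j(τ)⟩ₜ = Σ_σ α_σ · ⟨ρ, ins_j(σ)⟩ₜ. -/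
/-- The partition of {1,…,n} obtained from a partition π of {1,…,n−1} by inserting the
new element n into the part of π containing j. -/
def insertInto {m : ℕ} (j : Fin m) (π : Setoid (Fin m)) : Setoid (Fin (m + 1)) :=
  Setoid.ker (fun a : Fin (m + 1) =>
    Fin.lastCases (motive := fun _ => Quotient π) (Quotient.mk π j)
      (fun i => Quotient.mk π i) a)

section

variable {m : ℕ}

lemma insertInto_castSucc {j : Fin m} {π : Setoid (Fin m)} {a b : Fin m} :
    insertInto j π a.castSucc b.castSucc ↔ π a b := by
  unfold insertInto
  rw [Setoid.ker_def]
  simp [Quotient.eq]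

lemma insertInto_last {j : Fin m} {π : Setoid (Fin m)} {b : Fin m} :
    insertInto j π (Fin.last m) b.castSucc ↔ π j b := by
  unfold insertInto
  rw [Setoid.ker_def]
  simp [Quotient.eq]

lemma card_insertInto (j : Fin m) (π : Setoid (Fin m)) :
    Nat.card (Quotient (insertInto j π)) = Nat.card (Quotient π) := by
  refine Nat.card_congr (Setoid.quotientKerEquivOfSurjective _ fun q => ?_)
  induction q using Quotient.inductionOn with
  | h i => exact ⟨i.castSucc, by simp⟩

open Classical in
/-- The map on the parts of `ρ` that sends the part of the last element to the part of `j` and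
fixes every other part. -/
noncomputable def redirect (j : Fin m) (ρ : Setoid (Fin (m + 1))) (q : Quotient ρ) : Quotient ρ :=
  if q = Quotient.mk ρ (Fin.last m) then Quotient.mk ρ j.castSucc else q

/-- The partition of `Fin m` obtained from `ρ` by fusing the parts of the last element and of `j`,
then deleting the last element. -/
noncomputable def mergeLast (j : Fin m) (ρ : Setoid (Fin (m + 1))) : Setoid (Fin m) :=
  Setoid.ker fun i : Fin m => redirect j ρ (Quotient.mk ρ i.castSucc)

lemma sup_insertInto_eq_top_iff (j : Fin m) (ρ : Setoid (Fin (m + 1))) (π : Setoid (Fin m)) :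
    ρ ⊔ insertInto j π = ⊤ ↔ mergeLast j ρ ⊔ π = ⊤ := by
  constructor
  · intro h
    -- Pull `mergeLast j ρ ⊔ π` back along the map sending the last element to `j`.
    let f : Fin (m + 1) → Fin m := Fin.lastCases j id
    have hf : ∀ i : Fin m, f i.castSucc = i := fun i => by simp [f]
    have hl : f (Fin.last m) = j := by simp [f]
    have key : ∀ a, redirect j ρ (Quotient.mk ρ (f a).castSucc)
        = redirect j ρ (Quotient.mk ρ a) := by
      intro a
      induction a using Fin.lastCases with
      | last => rw [hl]; simp [redirect]
      | cast i => rw [hf]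
    have h1 : ρ ≤ (mergeLast j ρ ⊔ π).comap f := by
      intro a b hab
      refine (le_sup_left : mergeLast j ρ ≤ _) ?_
      change redirect j ρ _ = redirect j ρ _
      rw [key, key, Quotient.sound hab]
    have h2 : insertInto j π ≤ (mergeLast j ρ ⊔ π).comap f := by
      intro a b hab
      refine (le_sup_right : π ≤ _) ?_
      induction a using Fin.lastCases with
      | last =>
        induction b using Fin.lastCases with
        | last => exact π.refl _
        | cast k => rw [hl, hf]; exact insertInto_last.1 hab
      | cast i =>
        induction b using Fin.lastCases with
        | last => rw [hl, hf]; exact π.symm (insertInto_last.1 ((insertInto j π).symm hab))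
        | cast k => rw [hf, hf]; exact insertInto_castSucc.1 hab
    have h3 := sup_le h1 h2
    rw [h] at h3
    refine eq_top_iff.2 fun a b _ => ?_
    have h4 := @h3 a.castSucc b.castSucc trivial
    rw [Setoid.comap_rel, hf, hf] at h4
    exact h4
  · intro h
    set S := ρ ⊔ insertInto j π with hS
    have hρ : ρ ≤ S := le_sup_left
    have hπ : insertInto j π ≤ S := le_sup_right
    have hlast : S (Fin.last m) j.castSucc := hπ (insertInto_last.2 (π.refl j))
    have hred : ∀ q : Quotient ρ, Quotient.map' (s₁ := ρ) (s₂ := S) id (fun _ _ h => hρ h)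
        (redirect j ρ q) = Quotient.map' (s₁ := ρ) (s₂ := S) id (fun _ _ h => hρ h) q := by
      intro q
      unfold redirect
      split_ifs with hq
      · rw [hq]; exact Quotient.sound (S.symm hlast)
      · rfl
    have h1 : mergeLast j ρ ≤ S.comap Fin.castSucc := by
      intro a b hab
      have hab' : redirect j ρ (Quotient.mk ρ a.castSucc)
        = redirect j ρ (Quotient.mk ρ b.castSucc) := hab
      have := hred (Quotient.mk ρ a.castSucc)
      rw [hab', hred] at this
      exact S.symm (Quotient.exact this)
    have h2 : π ≤ S.comap Fin.castSucc := fun a b hab => hπ (insertInto_castSucc.2 hab)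
    have h3 := sup_le h1 h2
    rw [h] at h3
    have h4 : ∀ a b : Fin m, S a.castSucc b.castSucc := fun a b => @h3 a b trivial
    have h5 : ∀ a, S a j.castSucc := by
      intro a
      induction a using Fin.lastCases with
      | last => exact hlast
      | cast i => exact h4 i j
    exact eq_top_iff.2 fun a b _ => S.trans (h5 a) (S.symm (h5 b))

lemma card_mergeLast (j : Fin m) (ρ : Setoid (Fin (m + 1))) :
    Nat.card (Quotient (mergeLast j ρ)) =
      (Set.range fun i : Fin m => redirect j ρ (Quotient.mk ρ i.castSucc)).ncard := by
  rw [← Nat.card_coe_set_eq]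
  exact Nat.card_congr (Setoid.quotientKerEquivRange _)

lemma card_mergeLast_of_rel {j : Fin m} {ρ : Setoid (Fin (m + 1))}
    (h : ρ (Fin.last m) j.castSucc) :
    Nat.card (Quotient (mergeLast j ρ)) = Nat.card (Quotient ρ) := by
  rw [card_mergeLast, ← Set.ncard_univ]
  congr 1
  refine Set.eq_univ_of_forall fun q => ?_
  have hq : ∀ q, redirect j ρ q = q := by
    intro q
    unfold redirect
    split_ifs with h'
    · rw [h']; exact Quotient.sound (ρ.symm h)
    · rfl
  simp only [hq]
  induction q using Quotient.inductionOn with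
  | h a =>
    induction a using Fin.lastCases with
    | last => exact ⟨j, Quotient.sound (ρ.symm h)⟩
    | cast i => exact ⟨i, rfl⟩

lemma card_mergeLast_of_not_rel {j : Fin m} {ρ : Setoid (Fin (m + 1))}
    (h : ¬ ρ (Fin.last m) j.castSucc) :
    Nat.card (Quotient (mergeLast j ρ)) + 1 = Nat.card (Quotient ρ) := by
  rw [card_mergeLast, ← Set.ncard_univ,
    ← Set.ncard_sdiff_singleton_add_one (Set.mem_univ (Quotient.mk ρ (Fin.last m)))]
  congr 2
  ext q
  simp only [Set.mem_range, Set.mem_sdiff, Set.mem_univ, Set.mem_singleton_iff, true_and]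
  constructor
  · rintro ⟨i, rfl⟩
    unfold redirect
    split_ifs with h'
    · exact fun h'' => h (ρ.symm (Quotient.exact h''))
    · exact h'
  · intro hq
    induction q using Quotient.inductionOn with
    | h a =>
      induction a using Fin.lastCases with
      | last => exact absurd rfl hq
      | cast i => exact ⟨i, if_neg hq⟩

/-- The bipartite incidence graph of two partitions: its vertices are the parts of both, and each
element of `Fin m` joins the two parts containing it. -/
def incidenceGraph (ρ π : Setoid (Fin m)) : SimpleGraph (Quotient ρ ⊕ Quotient π) :=
  SimpleGraph.fromEdgeSet
    (Set.range fun i : Fin m => s(Sum.inl (Quotient.mk ρ i), Sum.inr (Quotient.mk π i)))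

lemma incidenceGraph_adj (ρ π : Setoid (Fin m)) (i : Fin m) :
    (incidenceGraph ρ π).Adj (Sum.inl (Quotient.mk ρ i)) (Sum.inr (Quotient.mk π i)) := by
  rw [incidenceGraph, SimpleGraph.fromEdgeSet_adj]
  exact ⟨⟨i, rfl⟩, by simp⟩

/-- A connected graph has at most one vertex more than it has edges; applied to the incidence
graph, this bounds the total number of parts. -/
lemma card_add_card_le (j : Fin m) {ρ π : Setoid (Fin m)} (h : ρ ⊔ π = ⊤) :
    Nat.card (Quotient ρ) + Nat.card (Quotient π) ≤ m + 1 := by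
  let G := incidenceGraph ρ π
  have hadj := incidenceGraph_adj ρ π
  let T : Setoid (Fin m) := G.reachableSetoid.comap fun i => Sum.inl (Quotient.mk ρ i)
  have hρ : ρ ≤ T := by
    intro a b hab
    change G.Reachable (Sum.inl (Quotient.mk ρ a)) (Sum.inl (Quotient.mk ρ b))
    rw [Quotient.sound hab]
  have hπ : π ≤ T := by
    intro a b hab
    change G.Reachable (Sum.inl (Quotient.mk ρ a)) (Sum.inl (Quotient.mk ρ b))
    have h1 := (hadj a).reachable
    rw [Quotient.sound hab] at h1
    exact h1.trans (hadj b).reachable.symm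
  have hT := sup_le hρ hπ
  rw [h] at hT
  have hr : ∀ v, G.Reachable v (Sum.inl (Quotient.mk ρ j)) := by
    rintro (q | q)
    · induction q using Quotient.inductionOn with
      | h a => exact @hT a j trivial
    · induction q using Quotient.inductionOn with
      | h a => exact (hadj a).reachable.symm.trans (@hT a j trivial)
  have hG : G.Connected :=
    { preconnected := fun u v => (hr u).trans (hr v).symm
      nonempty := ⟨Sum.inl (Quotient.mk ρ j)⟩ }
  have hcard := hG.card_vert_le_card_edgeSet_add_one
  have hedge : Nat.card G.edgeSet ≤ m := by
    rw [Nat.card_coe_set_eq]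
    calc G.edgeSet.ncard
        ≤ (Set.range fun i : Fin m =>
            s((Sum.inl (Quotient.mk ρ i) : Quotient ρ ⊕ Quotient π),
              Sum.inr (Quotient.mk π i))).ncard := by
          refine Set.ncard_le_ncard ?_ (Set.finite_range _)
          change (SimpleGraph.fromEdgeSet _).edgeSet ⊆ _
          rw [SimpleGraph.edgeSet_fromEdgeSet]
          exact Set.sdiff_subset
      _ ≤ m := by
          rw [← Set.image_univ]
          refine (Set.ncard_image_le Set.finite_univ).trans ?_
          simp [Set.ncard_univ]
  rw [Nat.card_sum] at hcard
  omega

lemma bform_insertInto_of_rel {j : Fin m} {ρ : Setoid (Fin (m + 1))}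
    (h : ρ (Fin.last m) j.castSucc) (π : Setoid (Fin m)) :
    bform ρ (insertInto j π) = 0 := by
  refine if_neg ?_
  rintro ⟨hc, ht⟩
  have := card_add_card_le j ((sup_insertInto_eq_top_iff j ρ π).1 ht)
  rw [card_mergeLast_of_rel h] at this
  rw [card_insertInto] at hc
  omega

lemma bform_insertInto_of_not_rel {j : Fin m} {ρ : Setoid (Fin (m + 1))}
    (h : ¬ ρ (Fin.last m) j.castSucc) (π : Setoid (Fin m)) :
    bform ρ (insertInto j π) = bform (mergeLast j ρ) π := by
  unfold bform
  rw [sup_insertInto_eq_top_iff, card_insertInto, ← card_mergeLast_of_not_rel h]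
  congr 2
  apply propext
  omega

end

theorem insert_into_part_equivalence (m : ℕ) (hm : 1 ≤ m) (j : Fin m)
    (τ : Setoid (Fin m)) (α : Setoid (Fin m) → ℤ)
    (h : ∀ ρ : Setoid (Fin m), bform ρ τ = ∑ σ : Setoid (Fin m), α σ * bform ρ σ) :
    ∀ ρ : Setoid (Fin (m + 1)),
      bform ρ (insertInto j τ) =
        ∑ σ : Setoid (Fin m), α σ * bform ρ (insertInto j σ) := by
  intro ρ
  by_cases hρ : ρ (Fin.last m) j.castSucc
  · simp [bform_insertInto_of_rel hρ]
  · simp only [bform_insertInto_of_not_rel hρ]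
    exact h _
end

section
/- Let G be a finite graph with positive real edge weights and n ≥ 1 distinct distinguished vertices (nodes) labeled 1,…,n. Then for every partition σ of {1,…,n}: Z_{G_σ}(tree) = Σ_τ ⟨σ,τ⟩ₜ · Z(τ), where the sum is over all partitions τ of {1,…,n}. -/
section Grove

variable {V : Type} [Fintype V] [DecidableEq V] {n : ℕ}

def groveGraph (F : Finset (Sym2 V)) : SimpleGraph V :=
  SimpleGraph.fromEdgeSet (F : Set (Sym2 V))

def IsGrove (G : SimpleGraph V) (node : Fin n → V) (F : Finset (Sym2 V)) : Prop :=
  (F : Set (Sym2 V)) ⊆ G.edgeSet ∧ (groveGraph F).IsAcyclic ∧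
    ∀ v : V, ∃ i : Fin n, (groveGraph F).Reachable v (node i)

def connSetoid (node : Fin n → V) (F : Finset (Sym2 V)) : Setoid (Fin n) :=
  ⟨fun i j => (groveGraph F).Reachable (node i) (node j),
   ⟨fun _ => SimpleGraph.Reachable.refl _, fun h => h.symm, fun h h' => h.trans h'⟩⟩

open Classical in
noncomputable def Zgrove (G : SimpleGraph V) (w : Sym2 V → ℝ) (node : Fin n → V)
    (τ : Setoid (Fin n)) : ℝ :=
  ∑ F ∈ Finset.univ.filter
      (fun F : Finset (Sym2 V) => IsGrove G node F ∧ connSetoid node F = τ),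
    ∏ e ∈ F, w e

def edgeSetoid (F : Finset (Sym2 V)) : Setoid V :=
  Relation.EqvGen.setoid fun u v => s(u, v) ∈ F

def glueSetoid (node : Fin n → V) (σ : Setoid (Fin n)) : Setoid V :=
  Relation.EqvGen.setoid fun u v => ∃ i j : Fin n, σ i j ∧ node i = u ∧ node j = v

def IsGluedSpanningTree (G : SimpleGraph V) (node : Fin n → V) (σ : Setoid (Fin n))
    (F : Finset (Sym2 V)) : Prop :=
  (F : Set (Sym2 V)) ⊆ G.edgeSet ∧
    F.card + 1 = Nat.card (Quotient (glueSetoid node σ)) ∧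
    glueSetoid node σ ⊔ edgeSetoid F = ⊤

open Classical in
noncomputable def ZgluedTree (G : SimpleGraph V) (w : Sym2 V → ℝ) (node : Fin n → V)
    (σ : Setoid (Fin n)) : ℝ :=
  ∑ F ∈ Finset.univ.filter (fun F : Finset (Sym2 V) => IsGluedSpanningTree G node σ F),
    ∏ e ∈ F, w e

end Grove

section Helpers

set_option linter.unusedSectionVars false

variable {V : Type} [Fintype V] [DecidableEq V] {n : ℕ}

/-! ### Components and edges of forests -/

lemma edgeSetoid_iff_reachable (F : Finset (Sym2 V)) (u v : V) :
    edgeSetoid F u v ↔ (groveGraph F).Reachable u v := by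
  constructor
  · intro h
    have hle : edgeSetoid F ≤ (groveGraph F).reachableSetoid := by
      refine Setoid.eqvGen_le fun x y hxy => ?_
      by_cases hne : x = y
      · subst hne
        exact SimpleGraph.Reachable.refl _
      · exact SimpleGraph.Adj.reachable ((SimpleGraph.fromEdgeSet_adj _).2 ⟨hxy, hne⟩)
    exact hle h
  · rintro ⟨p⟩
    induction p with
    | nil => exact (edgeSetoid F).refl _
    | cons hadj _ ih =>
      exact (edgeSetoid F).trans
        (Relation.EqvGen.rel _ _ ((SimpleGraph.fromEdgeSet_adj _).1 hadj).1) ih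

lemma edgeSetoid_insert_of_rel {F : Finset (Sym2 V)} {u v : V} (h : edgeSetoid F u v) :
    edgeSetoid (insert s(u, v) F) = edgeSetoid F := by
  apply le_antisymm
  · refine Setoid.eqvGen_le fun x y hxy => ?_
    rcases Finset.mem_insert.1 hxy with hxy | hxy
    · rcases Sym2.eq_iff.1 hxy with ⟨rfl, rfl⟩ | ⟨rfl, rfl⟩
      · exact h
      · exact (edgeSetoid F).symm h
    · exact Relation.EqvGen.rel _ _ hxy
  · exact Setoid.eqvGen_mono fun x y hxy => Finset.mem_insert_of_mem hxy

/-- Adding an edge between two distinct components merges exactly these two. The proof realizes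
the new equivalence as the kernel of the map to old components that redirects the component
of `v` to that of `u`; the range of that map misses only the component of `v`. -/
lemma card_quotient_edgeSetoid_insert {F : Finset (Sym2 V)} {u v : V}
    (h : ¬ edgeSetoid F u v) :
    Nat.card (Quotient (edgeSetoid (insert s(u, v) F))) + 1 =
      Nat.card (Quotient (edgeSetoid F)) := by
  classical
  let E := edgeSetoid F
  let f : V → Quotient E := fun x =>
    if Quotient.mk E x = Quotient.mk E v then Quotient.mk E u else Quotient.mk E x
  have huv : Quotient.mk E u ≠ Quotient.mk E v := fun h' => h (Quotient.exact h')
  have hFle : E ≤ edgeSetoid (insert s(u, v) F) :=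
    Setoid.eqvGen_mono fun x y hxy => Finset.mem_insert_of_mem hxy
  have hnew : edgeSetoid (insert s(u, v) F) u v :=
    Relation.EqvGen.rel _ _ (Finset.mem_insert_self _ _)
  have hker : edgeSetoid (insert s(u, v) F) = Setoid.ker f := by
    apply le_antisymm
    · refine Setoid.eqvGen_le fun x y hxy => ?_
      rw [Setoid.ker_def]
      rcases Finset.mem_insert.1 hxy with hxy | hxy
      · rcases Sym2.eq_iff.1 hxy with ⟨rfl, rfl⟩ | ⟨rfl, rfl⟩ <;> simp [f]
      · have : Quotient.mk E x = Quotient.mk E y :=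
          Quotient.sound (Relation.EqvGen.rel _ _ hxy)
        simp only [f, this]
    · -- every vertex is equivalent, after the insertion, to any representative of its image
      have hrep : ∀ x a, Quotient.mk E a = f x → edgeSetoid (insert s(u, v) F) x a := by
        intro x a hax
        by_cases hxv : Quotient.mk E x = Quotient.mk E v
        · simp only [f, hxv, if_true] at hax
          exact Setoid.trans' _ (hFle (Quotient.exact hxv))
            (Setoid.trans' _ (Setoid.symm' _ hnew) (Setoid.symm' _ (hFle (Quotient.exact hax))))
        · simp only [f, hxv, if_false] at hax
          exact Setoid.symm' _ (hFle (Quotient.exact hax))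
      intro x y hxy
      obtain ⟨a, ha⟩ := Quotient.exists_rep (f x)
      exact Setoid.trans' _ (hrep x a ha)
        (Setoid.symm' _ (hrep y a (ha.trans (Setoid.ker_def.1 hxy))))
  have hrange : Set.range f = {Quotient.mk E v}ᶜ := by
    ext q
    constructor
    · rintro ⟨x, rfl⟩
      by_cases hxv : Quotient.mk E x = Quotient.mk E v
      · simpa [f, hxv] using huv
      · simp [f, hxv]
    · intro hq
      obtain ⟨x, rfl⟩ := Quotient.exists_rep q
      exact ⟨x, if_neg hq⟩
  rw [hker, Nat.card_congr (Setoid.quotientKerEquivRange f), hrange, Nat.card_coe_set_eq,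
    add_comm, ← Set.ncard_singleton (Quotient.mk E v)]
  exact Set.ncard_add_ncard_compl _

/-- The cyclomatic number of a loopless edge set is nonnegative, and it vanishes exactly for
forests. -/
lemma forest_count (F : Finset (Sym2 V)) (hF : ∀ e ∈ F, ¬ e.IsDiag) :
    Nat.card V ≤ F.card + Nat.card (Quotient (edgeSetoid F)) ∧
      ((groveGraph F).IsAcyclic ↔
        F.card + Nat.card (Quotient (edgeSetoid F)) = Nat.card V) := by
  induction F using Finset.induction_on with
  | empty =>
    have hbot : edgeSetoid (∅ : Finset (Sym2 V)) = ⊥ := by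
      refine le_antisymm (Setoid.eqvGen_le fun x y hxy => ?_) bot_le
      simp at hxy
    have hcard : Nat.card (Quotient (edgeSetoid (∅ : Finset (Sym2 V)))) = Nat.card V := by
      rw [hbot]
      exact Nat.card_congr (Equiv.ofBijective (Quotient.mk (⊥ : Setoid V))
        ⟨fun x y hxy => Quotient.exact hxy, Quotient.mk_surjective⟩).symm
    have hg : groveGraph (∅ : Finset (Sym2 V)) = ⊥ := by simp [groveGraph]
    rw [hcard, hg]
    simp
  | insert e F he ih =>
    obtain ⟨hle, hiff⟩ := ih fun e' h' => hF e' (Finset.mem_insert_of_mem h')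
    induction e using Sym2.ind with
    | _ u v =>
    have huv : u ≠ v := by simpa using hF _ (Finset.mem_insert_self _ _)
    have hg : groveGraph (insert s(u, v) F) =
        groveGraph F ⊔ SimpleGraph.edge u v := by
      simp only [groveGraph, SimpleGraph.edge, Finset.coe_insert]
      rw [Set.insert_eq, Set.union_comm, SimpleGraph.fromEdgeSet_union]
    have hnadj : ¬ (groveGraph F).Adj u v := fun h =>
      he ((SimpleGraph.fromEdgeSet_adj _).1 h).1
    rw [hg, SimpleGraph.isAcyclic_sup_fromEdgeSet_iff, Finset.card_insert_of_notMem he]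
    by_cases hr : edgeSetoid F u v
    · rw [edgeSetoid_insert_of_rel hr]
      have hr' := (edgeSetoid_iff_reachable F u v).1 hr
      refine ⟨by omega, fun h => ?_, fun h => by omega⟩
      rcases h.2 hr' with h | h
      · exact absurd h huv
      · exact absurd h hnadj
    · have hc := card_quotient_edgeSetoid_insert hr
      have hr' : ¬ (groveGraph F).Reachable u v :=
        fun h => hr ((edgeSetoid_iff_reachable F u v).2 h)
      refine ⟨by omega, fun h => ?_, fun h => ⟨hiff.2 (by omega), fun h' => absurd h' hr'⟩⟩
      have := hiff.1 h.1
      omega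

/-! ### Vertices of the glued graph -/

lemma glueSetoid_node_iff {node : Fin n → V} (hnode : Function.Injective node)
    (σ : Setoid (Fin n)) (u v : V) :
    glueSetoid node σ u v ↔ u = v ∨ ∃ i j, σ i j ∧ node i = u ∧ node j = v := by
  constructor
  · intro h
    induction h with
    | rel _ _ h => exact Or.inr h
    | refl _ => exact Or.inl rfl
    | symm _ _ _ ih =>
      rcases ih with rfl | ⟨i, j, hij, hi, hj⟩
      · exact Or.inl rfl
      · exact Or.inr ⟨j, i, Setoid.symm' _ hij, hj, hi⟩
    | trans _ _ _ _ _ ih₁ ih₂ =>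
      rcases ih₁ with rfl | ⟨i, j, hij, rfl, rfl⟩
      · exact ih₂
      · rcases ih₂ with rfl | ⟨k, l, hkl, hk, rfl⟩
        · exact Or.inr ⟨i, j, hij, rfl, rfl⟩
        · obtain rfl := hnode hk
          exact Or.inr ⟨i, l, Setoid.trans' _ hij hkl, rfl, rfl⟩
  · rintro (rfl | h)
    · exact Setoid.refl' _ _
    · exact Relation.EqvGen.rel _ _ h

/-- The glued vertices are the non-node vertices together with the parts of `σ`. -/
lemma card_quotient_glueSetoid {node : Fin n → V} (hnode : Function.Injective node)
    (σ : Setoid (Fin n)) :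
    Nat.card (Quotient (glueSetoid node σ)) + n = Nat.card V + Nat.card (Quotient σ) := by
  let S := glueSetoid node σ
  let g : Quotient σ → Quotient S := Quotient.map' node fun i j hij =>
    Relation.EqvGen.rel _ _ ⟨i, j, hij, rfl, rfl⟩
  let f : ((Set.range node)ᶜ : Set V) ⊕ Quotient σ → Quotient S :=
    Sum.elim (fun x => Quotient.mk S x.1) g
  have hf : Function.Bijective f := by
    constructor
    · rintro (⟨x, hx⟩ | q) (⟨y, hy⟩ | r) h
      · rcases (glueSetoid_node_iff hnode σ x y).1 (Quotient.exact h) with rfl | ⟨i, _, _, hi, _⟩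
        · rfl
        · exact absurd ⟨i, hi⟩ hx
      · induction r using Quotient.inductionOn with | _ j =>
        rcases (glueSetoid_node_iff hnode σ x (node j)).1 (Quotient.exact h) with
          hxj | ⟨i, _, _, hi, _⟩
        · exact absurd ⟨j, hxj.symm⟩ hx
        · exact absurd ⟨i, hi⟩ hx
      · induction q using Quotient.inductionOn with | _ j =>
        rcases (glueSetoid_node_iff hnode σ (node j) y).1 (Quotient.exact h) with
          hxj | ⟨_, i, _, _, hi⟩
        · exact absurd ⟨j, hxj⟩ hy
        · exact absurd ⟨i, hi⟩ hy
      · induction q using Quotient.inductionOn with | _ i =>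
        induction r using Quotient.inductionOn with | _ j =>
        congr 1
        apply Quotient.sound
        rcases (glueSetoid_node_iff hnode σ (node i) (node j)).1 (Quotient.exact h) with
          hij | ⟨k, l, hkl, hk, hl⟩
        · rw [hnode hij]
        · rwa [hnode hk, hnode hl] at hkl
    · intro q
      induction q using Quotient.inductionOn with | _ x =>
      by_cases hx : x ∈ Set.range node
      · obtain ⟨i, rfl⟩ := hx
        exact ⟨Sum.inr (Quotient.mk σ i), rfl⟩
      · exact ⟨Sum.inl ⟨x, hx⟩, rfl⟩
  have hcard := Nat.card_eq_of_bijective f hf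
  have hnodes : (Set.range node).ncard = n := by
    rw [← Set.image_univ, Set.ncard_image_of_injective _ hnode, Set.ncard_univ, Nat.card_fin]
  have hcompl := Set.ncard_add_ncard_compl (Set.range node)
  rw [Nat.card_sum, Nat.card_coe_set_eq] at hcard
  change _ = Nat.card (Quotient (glueSetoid node σ)) at hcard
  omega

/-! ### Pairs of partitions with trivial join -/

/-- Two partitions whose join is trivial have at most `n + 1` parts in total: the bipartite graph
on their parts, with one edge for each element joining the two parts that contain it,
is connected. -/
lemma card_add_card_le_of_sup_eq_top (hn : 1 ≤ n) {σ τ : Setoid (Fin n)} (h : σ ⊔ τ = ⊤) :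
    Nat.card (Quotient σ) + Nat.card (Quotient τ) ≤ n + 1 := by
  let a : Fin n → Quotient σ ⊕ Quotient τ := fun i => Sum.inl (Quotient.mk σ i)
  let b : Fin n → Quotient σ ⊕ Quotient τ := fun i => Sum.inr (Quotient.mk τ i)
  let B : SimpleGraph (Quotient σ ⊕ Quotient τ) :=
    SimpleGraph.fromEdgeSet (Set.range fun i => s(a i, b i))
  have hab : ∀ i, B.Reachable (a i) (b i) := fun i =>
    SimpleGraph.Adj.reachable ((SimpleGraph.fromEdgeSet_adj _).2 ⟨⟨i, rfl⟩, by simp [a, b]⟩)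
  have hle : σ ⊔ τ ≤ B.reachableSetoid.comap a := by
    apply sup_le
    · intro i j hij
      have : a i = a j := congrArg Sum.inl (Quotient.sound hij)
      change B.Reachable (a i) (a j)
      rw [this]
    · intro i j hij
      have : b i = b j := congrArg Sum.inr (Quotient.sound hij)
      change B.Reachable (a i) (a j)
      exact (hab i).trans (this ▸ (hab j).symm)
  have haa : ∀ i j, B.Reachable (a i) (a j) := fun i j => hle (by rw [h]; trivial)
  have hall : ∀ x, B.Reachable x (a ⟨0, hn⟩) := by
    rintro (q | q)
    · induction q using Quotient.inductionOn with | _ i => exact haa i _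
    · induction q using Quotient.inductionOn with | _ i => exact (hab i).symm.trans (haa i _)
  have hconn : B.Connected :=
    { preconnected := fun x y => (hall x).trans (hall y).symm
      nonempty := ⟨a ⟨0, hn⟩⟩ }
  have hcard := hconn.card_vert_le_card_edgeSet_add_one
  have hedges : Nat.card B.edgeSet ≤ n := by
    have hsub : B.edgeSet ⊆ Set.range fun i => s(a i, b i) := by
      simp [B, SimpleGraph.edgeSet_fromEdgeSet]
    rw [Nat.card_coe_set_eq]
    refine (Set.ncard_le_ncard hsub (Set.toFinite _)).trans ?_
    rw [← Set.image_univ]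
    refine (Set.ncard_image_le (Set.toFinite _)).trans ?_
    rw [Set.ncard_univ, Nat.card_fin]
  rw [Nat.card_sum] at hcard
  omega

/-! ### Connectivity of the glued graph -/

/-- If every component contains a node, then restricting components to nodes is a bijection onto
the parts of the connectivity partition. -/
lemma card_quotient_connSetoid {node : Fin n → V} {F : Finset (Sym2 V)}
    (h : ∀ v, ∃ i, (groveGraph F).Reachable v (node i)) :
    Nat.card (Quotient (connSetoid node F)) = Nat.card (Quotient (edgeSetoid F)) := by
  refine Nat.card_eq_of_bijective (Quotient.map' node fun i j hij =>
    (edgeSetoid_iff_reachable F _ _).2 hij) ⟨?_, ?_⟩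
  · intro q r hqr
    induction q using Quotient.inductionOn with | _ i =>
    induction r using Quotient.inductionOn with | _ j =>
    exact Quotient.sound ((edgeSetoid_iff_reachable F _ _).1 (Quotient.exact hqr))
  · intro q
    induction q using Quotient.inductionOn with | _ v =>
    obtain ⟨i, hi⟩ := h v
    exact ⟨Quotient.mk _ i, Quotient.sound ((edgeSetoid_iff_reachable F _ _).2 hi.symm)⟩

/-- The glued graph is connected exactly when no component misses the nodes and `σ` joins the
connectivity partition to the trivial one. -/
lemma glue_sup_edge_eq_top_iff (hn : 1 ≤ n) (node : Fin n → V) (σ : Setoid (Fin n))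
    (F : Finset (Sym2 V)) :
    glueSetoid node σ ⊔ edgeSetoid F = ⊤ ↔
      (∀ v, ∃ i, (groveGraph F).Reachable v (node i)) ∧ σ ⊔ connSetoid node F = ⊤ := by
  constructor
  · intro h
    have hreach : ∀ v, ∃ i, (groveGraph F).Reachable v (node i) := by
      -- lying in a component with a node is a property invariant under both equivalences
      let P : V → Prop := fun v => ∃ i, (groveGraph F).Reachable v (node i)
      have hle : glueSetoid node σ ⊔ edgeSetoid F ≤ Setoid.ker P := by
        apply sup_le
        · refine Setoid.eqvGen_le ?_
          rintro _ _ ⟨i, j, _, rfl, rfl⟩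
          rw [Setoid.ker_def]
          exact propext ⟨fun _ => ⟨j, SimpleGraph.Reachable.refl _⟩,
            fun _ => ⟨i, SimpleGraph.Reachable.refl _⟩⟩
        · intro x y hxy
          rw [edgeSetoid_iff_reachable] at hxy
          rw [Setoid.ker_def]
          exact propext ⟨fun ⟨i, hi⟩ => ⟨i, hxy.symm.trans hi⟩, fun ⟨i, hi⟩ => ⟨i, hxy.trans hi⟩⟩
      intro v
      have hv : Setoid.ker P v (node ⟨0, hn⟩) := hle (by rw [h]; trivial)
      rw [Setoid.ker_def] at hv
      change P v
      rw [hv]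
      exact ⟨_, SimpleGraph.Reachable.refl _⟩
    refine ⟨hreach, ?_⟩
    -- send each vertex to the class, in the join, of a node of its component
    choose c hc using hreach
    have hcls : ∀ i j, (groveGraph F).Reachable (node i) (node j) →
        (σ ⊔ connSetoid node F) i j := fun i j hij =>
      (le_sup_right : connSetoid node F ≤ σ ⊔ connSetoid node F) hij
    have hle : glueSetoid node σ ⊔ edgeSetoid F ≤ (σ ⊔ connSetoid node F).comap c := by
      apply sup_le
      · refine Setoid.eqvGen_le ?_
        rintro _ _ ⟨i, j, hij, rfl, rfl⟩
        have hσ : (σ ⊔ connSetoid node F) i j :=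
          (le_sup_left : σ ≤ σ ⊔ connSetoid node F) hij
        exact Setoid.trans' (σ ⊔ connSetoid node F) (hcls _ _ (hc (node i)).symm)
          (Setoid.trans' _ hσ (hcls _ _ (hc (node j))))
      · intro x y hxy
        rw [edgeSetoid_iff_reachable] at hxy
        exact hcls _ _ ((hc x).symm.trans (hxy.trans (hc y)))
    refine eq_top_iff.2 fun i j _ => ?_
    have hij : (σ ⊔ connSetoid node F) (c (node i)) (c (node j)) := hle (by rw [h]; trivial)
    exact Setoid.trans' _ (hcls _ _ (hc (node i)))
      (Setoid.trans' _ hij (hcls _ _ (hc (node j)).symm))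
  · rintro ⟨hreach, h⟩
    have hE : ∀ x y, (groveGraph F).Reachable x y →
        (glueSetoid node σ ⊔ edgeSetoid F) x y := fun x y hxy =>
      (le_sup_right : edgeSetoid F ≤ glueSetoid node σ ⊔ edgeSetoid F)
        ((edgeSetoid_iff_reachable F x y).2 hxy)
    have hle : σ ⊔ connSetoid node F ≤ (glueSetoid node σ ⊔ edgeSetoid F).comap node := by
      apply sup_le
      · intro i j hij
        exact (le_sup_left : glueSetoid node σ ≤ glueSetoid node σ ⊔ edgeSetoid F)
          (Relation.EqvGen.rel _ _ ⟨i, j, hij, rfl, rfl⟩)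
      · intro i j hij
        exact hE _ _ hij
    refine eq_top_iff.2 fun x y _ => ?_
    obtain ⟨i, hi⟩ := hreach x
    obtain ⟨j, hj⟩ := hreach y
    have hij : (glueSetoid node σ ⊔ edgeSetoid F) (node i) (node j) := hle (by rw [h]; trivial)
    exact Setoid.trans' _ (hE _ _ hi) (Setoid.trans' _ hij (hE _ _ hj.symm))

/-! ### Spanning trees of the glued graph as groves -/

/-- Whether an edge set projects to a spanning tree of the glued graph depends, among groves,
only on the connectivity partition. -/
lemma isGluedSpanningTree_iff (G : SimpleGraph V) (hn : 1 ≤ n) {node : Fin n → V}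
    (hnode : Function.Injective node) (σ : Setoid (Fin n)) (F : Finset (Sym2 V)) :
    IsGluedSpanningTree G node σ F ↔ IsGrove G node F ∧
      Nat.card (Quotient σ) + Nat.card (Quotient (connSetoid node F)) = n + 1 ∧
        σ ⊔ connSetoid node F = ⊤ := by
  have hglue := card_quotient_glueSetoid hnode σ
  constructor
  · rintro ⟨hFG, hcard, htop⟩
    obtain ⟨hle, hiff⟩ := forest_count F fun e he => G.not_isDiag_of_mem_edgeSet (hFG he)
    obtain ⟨hreach, hsup⟩ := (glue_sup_edge_eq_top_iff hn node σ F).1 htop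
    have hconn := card_quotient_connSetoid hreach
    have hrank := card_add_card_le_of_sup_eq_top hn hsup
    exact ⟨⟨hFG, hiff.2 (by omega), hreach⟩, by omega, hsup⟩
  · rintro ⟨⟨hFG, hac, hreach⟩, hcard, hsup⟩
    obtain ⟨_, hiff⟩ := forest_count F fun e he => G.not_isDiag_of_mem_edgeSet (hFG he)
    have hconn := card_quotient_connSetoid hreach
    have hforest := hiff.1 hac
    exact ⟨hFG, by omega, (glue_sup_edge_eq_top_iff hn node σ F).2 ⟨hreach, hsup⟩⟩

end Helpers

theorem glued_tree_eq_sum_bform_Z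
    {V : Type} [Fintype V] [DecidableEq V] (G : SimpleGraph V)
    (w : Sym2 V → ℝ) (hw : ∀ e ∈ G.edgeSet, 0 < w e)
    (n : ℕ) (hn : 1 ≤ n) (node : Fin n → V) (hnode : Function.Injective node)
    (σ : Setoid (Fin n)) :
    ZgluedTree G w node σ =
      ∑ τ : Setoid (Fin n), (bform σ τ : ℝ) * Zgrove G w node τ := by
  classical
  simp only [ZgluedTree, Zgrove, Finset.sum_filter, Finset.mul_sum]
  rw [Finset.sum_comm]
  refine Finset.sum_congr rfl fun F _ => ?_
  -- only the connectivity partition of `F` contributes to the sum over `τ`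
  rw [Finset.sum_eq_single (connSetoid node F)
    (fun τ _ hτ => by rw [if_neg fun h => hτ h.2.symm, mul_zero])
    (fun h => absurd (Finset.mem_univ _) h)]
  simp only [isGluedSpanningTree_iff G hn hnode σ F, bform, and_true]
  by_cases hF : IsGrove G node F
  · simp [hF]
  · simp [hF]
end

section
/- Let G be a finite connected graph with positive real edge weights and n ≥ 1 distinct distinguished vertices (nodes) labeled 1,…,n. Then Z(tree) = Z(uncrossing) · det Λ̃, where Λ̃ is the matrix obtained from the response matrix Λ of (G, nodes) by deleting any one row and the corresponding column. -/
section Response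

variable {V : Type} [Fintype V] [DecidableEq V] {n : ℕ}

-- The weighted Laplacian of (G, w).
open Classical in
noncomputable def lapMatrix' (G : SimpleGraph V) (w : Sym2 V → ℝ) : Matrix V V ℝ :=
  fun u v =>
    if u = v then ∑ x : V, (if G.Adj u x then w s(u, x) else 0)
    else -(if G.Adj u v then w s(u, v) else 0)

/-- The inner (non-node) vertices. -/
def InnerVx (node : Fin n → V) : Type := {v : V // ∀ i : Fin n, node i ≠ v}

noncomputable instance (node : Fin n → V) : Fintype (InnerVx node) :=
  Subtype.fintype _

instance (node : Fin n → V) : DecidableEq (InnerVx node) :=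
  Subtype.instDecidableEq

/-- The response matrix Λ = A − B K⁻¹ Bᵀ of (G, nodes), where Δ = [[A,B],[Bᵀ,K]] is the
block decomposition of the weighted Laplacian with the nodes first. -/
noncomputable def responseMatrix (G : SimpleGraph V) (w : Sym2 V → ℝ)
    (node : Fin n → V) : Matrix (Fin n) (Fin n) ℝ :=
  let Δ := lapMatrix' G w
  let A : Matrix (Fin n) (Fin n) ℝ := Matrix.of fun i j => Δ (node i) (node j)
  let B : Matrix (Fin n) (InnerVx node) ℝ := Matrix.of fun i u => Δ (node i) u.val
  let Bt : Matrix (InnerVx node) (Fin n) ℝ := Matrix.of fun u j => Δ u.val (node j)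
  let K : Matrix (InnerVx node) (InnerVx node) ℝ := Matrix.of fun u v => Δ u.val v.val
  A - B * K⁻¹ * Bt

end Response

/-! ### Forests rooted at a vertex set -/

open SimpleGraph in
lemma groveGraph_insert {V : Type} [Fintype V] [DecidableEq V] (F : Finset (Sym2 V)) (r v : V) :
    groveGraph (insert s(r, v) F) = groveGraph F ⊔ edge r v := by
  rw [groveGraph, groveGraph, edge, ← fromEdgeSet_union, Finset.coe_insert, Set.union_comm,
    Set.insert_eq]

lemma groveGraph_mono {V : Type} [Fintype V] [DecidableEq V] {F F' : Finset (Sym2 V)}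
    (h : F ⊆ F') : groveGraph F ≤ groveGraph F' :=
  SimpleGraph.fromEdgeSet_mono (by exact_mod_cast h)

/-- Adding the edge `rv` creates only connections that pass through it. -/
lemma reachable_insert {V : Type} [Fintype V] [DecidableEq V] {F : Finset (Sym2 V)} {r v x y : V}
    (h : (groveGraph (insert s(r, v) F)).Reachable x y) :
    (groveGraph F).Reachable x y ∨
      ((groveGraph F).Reachable x r ∧ (groveGraph F).Reachable v y) ∨
      ((groveGraph F).Reachable x v ∧ (groveGraph F).Reachable r y) := by
  obtain ⟨p⟩ := h
  induction p with
  | nil => exact Or.inl (.refl _)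
  | @cons a b c hab _ ih =>
    rw [groveGraph_insert, SimpleGraph.sup_adj, SimpleGraph.edge_adj] at hab
    rcases hab with hab | ⟨⟨rfl, rfl⟩ | ⟨rfl, rfl⟩, -⟩
    · have := hab.reachable
      rcases ih with h | ⟨h, h'⟩ | ⟨h, h'⟩
      · exact Or.inl (this.trans h)
      · exact Or.inr (Or.inl ⟨this.trans h, h'⟩)
      · exact Or.inr (Or.inr ⟨this.trans h, h'⟩)
    · rcases ih with h | ⟨h, h'⟩ | ⟨h, h'⟩
      · exact Or.inr (Or.inl ⟨.refl _, h⟩)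
      · exact Or.inr (Or.inl ⟨.refl _, h'⟩)
      · exact Or.inl h'
    · rcases ih with h | ⟨h, h'⟩ | ⟨h, h'⟩
      · exact Or.inr (Or.inr ⟨.refl _, h⟩)
      · exact Or.inl h'
      · exact Or.inr (Or.inr ⟨.refl _, h'⟩)

/-- `F` is a spanning forest each of whose components contains exactly one vertex of `S`,
its root: every vertex reaches `S`, and distinct vertices of `S` are not connected. -/
structure IsRootedForest {V : Type} [Fintype V] [DecidableEq V] (S : Finset V)
    (F : Finset (Sym2 V)) : Prop where
  acyclic : (groveGraph F).IsAcyclic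
  cover : ∀ x, ∃ s ∈ S, (groveGraph F).Reachable x s
  separated : ∀ s ∈ S, ∀ t ∈ S, (groveGraph F).Reachable s t → s = t

/-- For an edge `rv` leaving the root set `S`, removing it from a forest makes `v` the root of the
detached piece; conversely, adding it hangs the tree rooted at `v` below `r`. -/
lemma isRootedForest_insert_iff {V : Type} [Fintype V] [DecidableEq V] {S : Finset V}
    {F : Finset (Sym2 V)} {r v : V} (hr : r ∈ S) (hv : v ∉ S) (he : s(r, v) ∉ F) :
    IsRootedForest S (insert s(r, v) F) ↔ IsRootedForest (insert v S) F := by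
  have hrv : r ≠ v := fun h => hv (h ▸ hr)
  have hmono : ∀ {x y}, (groveGraph F).Reachable x y →
      (groveGraph (insert s(r, v) F)).Reachable x y :=
    fun h => h.mono (groveGraph_mono (Finset.subset_insert _ _))
  have hedge : (groveGraph (insert s(r, v) F)).Reachable r v := by
    apply SimpleGraph.Adj.reachable
    simp [groveGraph, hrv]
  constructor
  · rintro ⟨hac, hcov, hsep⟩
    rw [groveGraph_insert, SimpleGraph.isAcyclic_sup_fromEdgeSet_iff] at hac
    have hnr : ¬ (groveGraph F).Reachable r v := fun h => by
      have := hac.2 h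
      simp [groveGraph, hrv, he] at this
    have hsv : ∀ s ∈ S, ¬ (groveGraph F).Reachable s v := fun s hs h => by
      have := hsep s hs r hr ((hmono h).trans hedge.symm)
      exact hnr (this ▸ h)
    refine ⟨hac.1, fun x => ?_, fun s hs t ht h => ?_⟩
    · obtain ⟨s, hs, h⟩ := hcov x
      rcases reachable_insert h with h | ⟨h, -⟩ | ⟨h, -⟩
      · exact ⟨s, Finset.mem_insert_of_mem hs, h⟩
      · exact ⟨r, Finset.mem_insert_of_mem hr, h⟩
      · exact ⟨v, Finset.mem_insert_self _ _, h⟩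
    · rcases Finset.mem_insert.1 hs with hs' | hs' <;>
        rcases Finset.mem_insert.1 ht with ht' | ht'
      · rw [hs', ht']
      · exact absurd (hs' ▸ h.symm) (hsv t ht')
      · exact absurd (ht' ▸ h) (hsv s hs')
      · exact hsep s hs' t ht' (hmono h)
  · rintro ⟨hac, hcov, hsep⟩
    have hsv : ∀ s ∈ S, ¬ (groveGraph F).Reachable s v := fun s hs h =>
      hv (hsep s (Finset.mem_insert_of_mem hs) v (Finset.mem_insert_self _ _) h ▸ hs)
    refine ⟨?_, fun x => ?_, fun s hs t ht h => ?_⟩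
    · rw [groveGraph_insert]
      exact hac.sup_edge_of_not_reachable (hsv r hr)
    · obtain ⟨s, hs, h⟩ := hcov x
      rcases Finset.mem_insert.1 hs with rfl | hs
      · exact ⟨r, hr, (hmono h).trans hedge.symm⟩
      · exact ⟨s, hs, hmono h⟩
    · rcases reachable_insert h with h | ⟨-, h⟩ | ⟨h, -⟩
      · exact hsep s (Finset.mem_insert_of_mem hs) t (Finset.mem_insert_of_mem ht) h
      · exact absurd h.symm (hsv t ht)
      · exact absurd h (hsv s hs)

lemma isRootedForest_univ_iff {V : Type} [Fintype V] [DecidableEq V] {F : Finset (Sym2 V)}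
    (hF : ∀ e ∈ F, ¬ e.IsDiag) : IsRootedForest Finset.univ F ↔ F = ∅ := by
  constructor
  · rintro ⟨-, -, hsep⟩
    refine Finset.eq_empty_of_forall_notMem fun e he => ?_
    induction e with | _ a b =>
    have hab : a ≠ b := by simpa using hF _ he
    refine hab (hsep a (Finset.mem_univ _) b (Finset.mem_univ _) ?_)
    apply SimpleGraph.Adj.reachable
    simp [groveGraph, hab, he]
  · rintro rfl
    have : groveGraph (∅ : Finset (Sym2 V)) = ⊥ := by simp [groveGraph]
    refine ⟨by rw [this]; exact SimpleGraph.isAcyclic_bot,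
      fun x => ⟨x, Finset.mem_univ _, .refl _⟩, fun s _ t _ h => ?_⟩
    rw [this] at h
    exact SimpleGraph.reachable_bot.1 h

/-- A walk from outside `S` into `S` crosses an edge leaving `S`. -/
lemma exists_crossing_adj {V : Type} {H : SimpleGraph V} {S : Finset V} {x y : V}
    (h : H.Reachable x y) (hx : x ∉ S) (hy : y ∈ S) : ∃ r ∈ S, ∃ v ∉ S, H.Adj r v := by
  obtain ⟨p⟩ := h.symm
  obtain ⟨d, -, h1, h2⟩ := p.exists_boundary_dart (S : Set V) (by simpa using hy) (by simpa using hx)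
  exact ⟨d.fst, by simpa using h1, d.snd, by simpa using h2, d.adj⟩

lemma exists_rootedForest {V : Type} [Fintype V] [DecidableEq V] (G : SimpleGraph V)
    (hG : G.Connected) (m : ℕ) : ∀ (S : Finset V), S.Nonempty → (Finset.univ \ S).card = m →
    ∃ F : Finset (Sym2 V), (F : Set (Sym2 V)) ⊆ G.edgeSet ∧ IsRootedForest S F := by
  induction m with
  | zero =>
    intro S _ hm
    have hS : S = Finset.univ := by
      rwa [Finset.card_eq_zero, Finset.sdiff_eq_empty_iff_subset, Finset.univ_subset_iff] at hm
    subst hS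
    exact ⟨∅, by simp, (isRootedForest_univ_iff (by simp)).2 rfl⟩
  | succ m ih =>
    intro S ⟨s, hs⟩ hm
    obtain ⟨x, hx⟩ : (Finset.univ \ S).Nonempty := Finset.card_pos.1 (by omega)
    obtain ⟨r, hr, v, hv, hrv⟩ :=
      exists_crossing_adj (hG.preconnected x s) (by simpa using hx) hs
    obtain ⟨F, hFG, hF⟩ := ih (insert v S) ⟨v, Finset.mem_insert_self _ _⟩ (by
      rw [Finset.sdiff_insert, Finset.card_erase_of_mem (by simpa using hv), hm]; rfl)
    -- an edge joining the two roots `r` and `v` cannot belong to the forest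
    have he : s(r, v) ∉ F := fun he => hrv.ne <| hF.separated r (Finset.mem_insert_of_mem hr) v
      (Finset.mem_insert_self _ _) (SimpleGraph.Adj.reachable (by simp [groveGraph, he, hrv.ne]))
    refine ⟨insert s(r, v) F, ?_, (isRootedForest_insert_iff hr hv he).2 hF⟩
    rw [Finset.coe_insert]
    exact Set.insert_subset hrv hFG

/-! ### The matrix-tree theorem for principal minors -/

/-- Row `u` of the Laplacian of the edge set `E`: the sum of `w(ux) (δ_u − δ_x)` over the edges
`ux` in `E`. A loop would contribute zero. -/
noncomputable def lapRow {V : Type} [Fintype V] [DecidableEq V] (w : Sym2 V → ℝ)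
    (E : Finset (Sym2 V)) (u : V) : V → ℝ :=
  ∑ x, if s(u, x) ∈ E then w s(u, x) • (Pi.single u 1 - Pi.single x 1 : V → ℝ) else 0

/-- The Laplacian of the edge set `E` with the rows of `S` replaced by rows of the identity. Its
determinant is the principal minor of the Laplacian on the complement of `S`, but its index type
does not depend on `S`. -/
noncomputable def groundedLap {V : Type} [Fintype V] [DecidableEq V] (w : Sym2 V → ℝ)
    (E : Finset (Sym2 V)) (S : Finset V) : Matrix V V ℝ :=
  Matrix.of fun u => if u ∈ S then Pi.single u 1 else lapRow w E u

lemma groundedLap_of_mem {V : Type} [Fintype V] [DecidableEq V] (w : Sym2 V → ℝ)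
    (E : Finset (Sym2 V)) {S : Finset V} {u : V} (hu : u ∈ S) :
    groundedLap w E S u = Pi.single u 1 := if_pos hu

lemma groundedLap_of_notMem {V : Type} [Fintype V] [DecidableEq V] (w : Sym2 V → ℝ)
    (E : Finset (Sym2 V)) {S : Finset V} {u : V} (hu : u ∉ S) :
    groundedLap w E S u = lapRow w E u := if_neg hu

lemma lapRow_insert_of_mem {V : Type} [Fintype V] [DecidableEq V] (w : Sym2 V → ℝ)
    {E : Finset (Sym2 V)} {r v : V} (he : s(r, v) ∉ E) :
    lapRow w (insert s(r, v) E) v =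
      lapRow w E v + w s(r, v) • (Pi.single v 1 - Pi.single r 1 : V → ℝ) := by
  rw [lapRow, ← Finset.add_sum_erase _ _ (Finset.mem_univ r), lapRow,
    ← Finset.add_sum_erase (a := r) _ _ (Finset.mem_univ r)]
  rw [Sym2.eq_swap (a := v) (b := r), if_pos (Finset.mem_insert_self _ _), if_neg he, zero_add,
    add_comm]
  congr 1
  refine Finset.sum_congr rfl fun x hx => ?_
  have hx : x ≠ r := (Finset.mem_erase.1 hx).1
  have : s(v, x) ≠ s(r, v) := by
    rw [Sym2.eq_swap (a := r), ne_eq, Sym2.congr_right]; exact hx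
  simp [this]

lemma lapRow_insert_of_ne {V : Type} [Fintype V] [DecidableEq V] (w : Sym2 V → ℝ)
    {E : Finset (Sym2 V)} {r v u : V} (hr : u ≠ r) (hv : u ≠ v) :
    lapRow w (insert s(r, v) E) u = lapRow w E u := by
  refine Finset.sum_congr rfl fun x _ => ?_
  have : s(u, x) ≠ s(r, v) := by
    intro h
    rcases Sym2.eq_iff.1 h with ⟨h, -⟩ | ⟨h, -⟩ <;> contradiction
  simp [this]

/-- Deletion of an edge `rv` leaving `S`: it affects only row `v`, and modulo row `r`, which is
`δ_r`, the change in that row is a multiple of `δ_v`. -/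
lemma det_groundedLap_insert {V : Type} [Fintype V] [DecidableEq V] (w : Sym2 V → ℝ)
    {E : Finset (Sym2 V)} {S : Finset V} {r v : V} (hr : r ∈ S) (hv : v ∉ S)
    (he : s(r, v) ∉ E) :
    (groundedLap w (insert s(r, v) E) S).det =
      (groundedLap w E S).det + w s(r, v) * (groundedLap w E (insert v S)).det := by
  have hrv : r ≠ v := fun h => hv (h ▸ hr)
  have h1 : groundedLap w (insert s(r, v) E) S = (groundedLap w E S).updateRow v
      (groundedLap w E S v + w s(r, v) • (Pi.single v 1 + (-1 : ℝ) • groundedLap w E S r)) := by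
    refine funext fun u => ?_
    by_cases huv : u = v
    · subst huv
      rw [Matrix.updateRow_self, groundedLap_of_notMem w _ hv, groundedLap_of_notMem w _ hv,
        groundedLap_of_mem w _ hr, lapRow_insert_of_mem w he, neg_one_smul, sub_eq_add_neg]
    · rw [Matrix.updateRow_ne huv]
      by_cases hu : u ∈ S
      · rw [groundedLap_of_mem w _ hu, groundedLap_of_mem w _ hu]
      · rw [groundedLap_of_notMem w _ hu, groundedLap_of_notMem w _ hu]
        exact lapRow_insert_of_ne w (fun h => hu (h ▸ hr)) huv
  have h2 : groundedLap w E (insert v S) = (groundedLap w E S).updateRow v (Pi.single v 1) := by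
    refine funext fun u => ?_
    by_cases huv : u = v
    · subst huv
      rw [Matrix.updateRow_self, groundedLap_of_mem w _ (Finset.mem_insert_self _ _)]
    · rw [Matrix.updateRow_ne huv]
      by_cases hu : u ∈ S
      · rw [groundedLap_of_mem w _ hu, groundedLap_of_mem w _ (Finset.mem_insert_of_mem hu)]
      · rw [groundedLap_of_notMem w _ hu, groundedLap_of_notMem w _ (by simp [hu, huv])]
  rw [h1, Matrix.det_updateRow_add, Matrix.updateRow_eq_self, Matrix.det_updateRow_smul,
    Matrix.det_updateRow_add, Matrix.det_updateRow_smul, Matrix.det_updateRow_eq_zero hrv, ← h2]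
  ring

/-- If no edge leaves `S`, the indicator of the complement of `S` is in the kernel. -/
lemma det_groundedLap_eq_zero {V : Type} [Fintype V] [DecidableEq V] (w : Sym2 V → ℝ)
    {E : Finset (Sym2 V)} {S : Finset V} (hS : S ≠ Finset.univ)
    (hE : ∀ r ∈ S, ∀ v ∉ S, s(r, v) ∉ E) : (groundedLap w E S).det = 0 := by
  rw [← Matrix.exists_mulVec_eq_zero_iff]
  refine ⟨fun u => if u ∈ S then 0 else 1, fun h => hS ?_, ?_⟩
  · refine Finset.eq_univ_of_forall fun u => ?_
    by_contra hu
    simpa [hu] using congrFun h u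
  · ext u
    change groundedLap w E S u ⬝ᵥ _ = 0
    by_cases hu : u ∈ S
    · simp [groundedLap_of_mem w E hu, hu]
    · rw [groundedLap_of_notMem w E hu, lapRow, sum_dotProduct]
      refine Finset.sum_eq_zero fun x _ => ?_
      split_ifs with hx
      · have hxS : x ∉ S := fun h => hE x h u hu (by rwa [Sym2.eq_swap])
        simp [smul_dotProduct, sub_dotProduct, single_dotProduct, hu, hxS]
      · simp

open Classical in
/-- The principal-minors matrix-tree theorem: the determinant of the Laplacian grounded at `S`
is the weighted count of the spanning forests rooted at `S`. Both sides satisfy the same recursion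
under deletion of an edge leaving `S`. -/
theorem det_groundedLap {V : Type} [Fintype V] [DecidableEq V] (w : Sym2 V → ℝ)
    (E : Finset (Sym2 V)) (S : Finset V) (hE : ∀ e ∈ E, ¬ e.IsDiag) :
    (groundedLap w E S).det =
      ∑ F ∈ E.powerset, if IsRootedForest S F then ∏ e ∈ F, w e else 0 := by
  induction E using Finset.strongInduction generalizing S with
  | H E ih =>
  by_cases hcross : ∃ r ∈ S, ∃ v ∉ S, s(r, v) ∈ E
  · obtain ⟨r, hr, v, hv, he⟩ := hcross
    obtain ⟨E', he', rfl⟩ : ∃ E', s(r, v) ∉ E' ∧ E = insert s(r, v) E' :=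
      ⟨E.erase s(r, v), Finset.notMem_erase _ _, (Finset.insert_erase he).symm⟩
    have hE' : ∀ e ∈ E', ¬ e.IsDiag := fun e h => hE e (Finset.mem_insert_of_mem h)
    rw [det_groundedLap_insert w hr hv he', ih E' (Finset.ssubset_insert he') S hE',
      ih E' (Finset.ssubset_insert he') (insert v S) hE', Finset.sum_powerset_insert he',
      Finset.mul_sum]
    congr 1
    refine Finset.sum_congr rfl fun F hF => ?_
    have heF : s(r, v) ∉ F := fun h => he' (Finset.mem_powerset.1 hF h)
    simp only [isRootedForest_insert_iff hr hv heF, Finset.prod_insert heF, mul_ite, mul_zero]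
  · push Not at hcross
    by_cases hS : S = Finset.univ
    · subst hS
      have h1 : groundedLap w E Finset.univ = 1 := by
        refine funext fun u => ?_
        rw [groundedLap_of_mem w E (Finset.mem_univ u)]
        ext x
        simp [Matrix.one_apply, Pi.single_apply, eq_comm]
      rw [h1, Matrix.det_one, Finset.sum_eq_single ∅]
      · rw [if_pos ((isRootedForest_univ_iff (by simp)).2 rfl), Finset.prod_empty]
      · intro F hF hne
        rw [if_neg]
        rwa [isRootedForest_univ_iff fun e he => hE e (Finset.mem_powerset.1 hF he)]
      · simp
    · rw [det_groundedLap_eq_zero w hS hcross, eq_comm]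
      refine Finset.sum_eq_zero fun F hF => if_neg fun hF' => hS ?_
      refine Finset.eq_univ_of_forall fun x => ?_
      by_contra hx
      obtain ⟨s, hs, h⟩ := hF'.cover x
      obtain ⟨r, hr, v, hv, hrv⟩ := exists_crossing_adj h hx hs
      have : s(r, v) ∈ F := by
        have := hrv
        simp only [groveGraph, SimpleGraph.fromEdgeSet_adj] at this
        exact_mod_cast this.1
      exact hcross r hr v hv (Finset.mem_powerset.1 hF this)

open Classical in
lemma lapRow_edgeFinset {V : Type} [Fintype V] [DecidableEq V] (G : SimpleGraph V)
    (w : Sym2 V → ℝ) (u v : V) : lapRow w G.edgeFinset u v = lapMatrix' G w u v := by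
  simp only [lapRow, lapMatrix', Finset.sum_apply, SimpleGraph.mem_edgeFinset,
    SimpleGraph.mem_edgeSet]
  by_cases huv : u = v
  · subst huv
    rw [if_pos rfl]
    refine Finset.sum_congr rfl fun x _ => ?_
    split_ifs with h
    · simp [h.ne]
    · rfl
  · rw [if_neg huv, Finset.sum_eq_single v]
    · split_ifs with h
      · simp [Ne.symm huv]
      · simp
    · intro x _ hx
      split_ifs
      · simp [Ne.symm huv, hx.symm]
      · rfl
    · simp

open Classical in
/-- The grounded determinant of `G` is the principal minor of its Laplacian off `S`. -/
lemma det_groundedLap_eq_minor {V : Type} [Fintype V] [DecidableEq V] (G : SimpleGraph V)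
    (w : Sym2 V → ℝ) (S : Finset V) :
    (groundedLap w G.edgeFinset S).det =
      ((lapMatrix' G w).submatrix (Subtype.val : {v // ¬ v ∈ S} → V) Subtype.val).det := by
  rw [Matrix.twoBlockTriangular_det' _ (fun v => v ∈ S)]
  · have h1 : Matrix.toSquareBlockProp (groundedLap w G.edgeFinset S) (fun v => v ∈ S) = 1 := by
      ext i j
      rw [Matrix.toSquareBlockProp_def, Matrix.of_apply, groundedLap_of_mem w _ i.2]
      by_cases hij : i = j
      · subst hij
        simp
      · rw [Matrix.one_apply_ne hij]
        exact Pi.single_eq_of_ne (fun h => hij (Subtype.ext h.symm)) _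
    have h2 : ∀ inst : Fintype {v // v ∈ S},
        @Matrix.det {v // v ∈ S} _ inst ℝ _ (1 : Matrix {v // v ∈ S} {v // v ∈ S} ℝ) = 1 :=
      fun inst => Matrix.det_one
    rw [h1, h2, one_mul]
    congr 1
    ext i j
    rw [Matrix.toSquareBlockProp_def, Matrix.of_apply, groundedLap_of_notMem w _ i.2,
      lapRow_edgeFinset]
    rfl
  · intro i hi j hj
    rw [groundedLap_of_mem w _ hi]
    exact Pi.single_eq_of_ne (fun h : j = i => hj (h ▸ hi)) _

/-! ### Groves as rooted forests -/

open Classical in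
lemma Zgrove_eq_det {V : Type} [Fintype V] [DecidableEq V] (G : SimpleGraph V)
    (w : Sym2 V → ℝ) {n : ℕ} (node : Fin n → V) (τ : Setoid (Fin n)) (S : Finset V)
    (h : ∀ F : Finset (Sym2 V), (F : Set (Sym2 V)) ⊆ G.edgeSet →
      (IsGrove G node F ∧ connSetoid node F = τ ↔ IsRootedForest S F)) :
    Zgrove G w node τ =
      ((lapMatrix' G w).submatrix (Subtype.val : {v // ¬ v ∈ S} → V) Subtype.val).det := by
  have hsub : ∀ F : Finset (Sym2 V), F ⊆ G.edgeFinset ↔ (F : Set (Sym2 V)) ⊆ G.edgeSet := by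
    intro F
    rw [← Finset.coe_subset, SimpleGraph.coe_edgeFinset]
  rw [← det_groundedLap_eq_minor, det_groundedLap w _ S fun e he =>
    G.not_isDiag_of_mem_edgeSet (SimpleGraph.mem_edgeFinset.1 he), ← Finset.sum_filter, Zgrove]
  refine Finset.sum_congr ?_ fun _ _ => rfl
  ext F
  simp only [Finset.mem_filter, Finset.mem_univ, true_and, Finset.mem_powerset]
  constructor
  · intro hF
    exact ⟨(hsub F).2 hF.1.1, (h F hF.1.1).1 hF⟩
  · intro hF
    exact (h F ((hsub F).1 hF.1)).2 hF.2

lemma grove_tree_iff {V : Type} [Fintype V] [DecidableEq V] (G : SimpleGraph V)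
    {n : ℕ} (node : Fin n → V) (k : Fin n) (F : Finset (Sym2 V))
    (hF : (F : Set (Sym2 V)) ⊆ G.edgeSet) :
    IsGrove G node F ∧ connSetoid node F = ⊤ ↔ IsRootedForest {node k} F := by
  constructor
  · rintro ⟨⟨-, hac, hcov⟩, hconn⟩
    refine ⟨hac, fun x => ⟨node k, Finset.mem_singleton_self _, ?_⟩, fun s hs t ht _ => ?_⟩
    · obtain ⟨i, hi⟩ := hcov x
      have : (connSetoid node F) i k := by rw [hconn]; trivial
      exact hi.trans this
    · rw [Finset.mem_singleton.1 hs, Finset.mem_singleton.1 ht]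
  · rintro ⟨hac, hcov, -⟩
    have hk : ∀ x, (groveGraph F).Reachable x (node k) := fun x => by
      obtain ⟨s, hs, h⟩ := hcov x
      rwa [Finset.mem_singleton.1 hs] at h
    refine ⟨⟨hF, hac, fun x => ⟨k, hk x⟩⟩, ?_⟩
    ext i j
    exact ⟨fun _ => trivial, fun _ => (hk _).trans (hk _).symm⟩

lemma grove_uncrossing_iff {V : Type} [Fintype V] [DecidableEq V] (G : SimpleGraph V)
    {n : ℕ} (node : Fin n → V) (hnode : Function.Injective node) (F : Finset (Sym2 V))
    (hF : (F : Set (Sym2 V)) ⊆ G.edgeSet) :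
    IsGrove G node F ∧ connSetoid node F = ⊥ ↔
      IsRootedForest (Finset.univ.image node) F := by
  constructor
  · rintro ⟨⟨-, hac, hcov⟩, hconn⟩
    refine ⟨hac, fun x => ?_, fun s hs t ht h => ?_⟩
    · obtain ⟨i, hi⟩ := hcov x
      exact ⟨node i, Finset.mem_image_of_mem _ (Finset.mem_univ _), hi⟩
    · obtain ⟨i, -, rfl⟩ := Finset.mem_image.1 hs
      obtain ⟨j, -, rfl⟩ := Finset.mem_image.1 ht
      have : (connSetoid node F) i j := h
      rw [hconn] at this
      exact congrArg node this
  · rintro ⟨hac, hcov, hsep⟩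
    refine ⟨⟨hF, hac, fun x => ?_⟩, ?_⟩
    · obtain ⟨s, hs, h⟩ := hcov x
      obtain ⟨i, -, rfl⟩ := Finset.mem_image.1 hs
      exact ⟨i, h⟩
    · ext i j
      refine ⟨fun h => hnode (hsep _ (Finset.mem_image_of_mem _ (Finset.mem_univ _)) _
        (Finset.mem_image_of_mem _ (Finset.mem_univ _)) h), fun h => ?_⟩
      obtain rfl : i = j := h
      exact SimpleGraph.Reachable.refl _

lemma Zgrove_uncrossing_pos {V : Type} [Fintype V] [DecidableEq V] (G : SimpleGraph V)
    (hG : G.Connected) (w : Sym2 V → ℝ) (hw : ∀ e ∈ G.edgeSet, 0 < w e) {n : ℕ}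
    (node : Fin n → V) (hnode : Function.Injective node) (k : Fin n) :
    0 < Zgrove G w node ⊥ := by
  classical
  refine Finset.sum_pos (fun F hF => Finset.prod_pos fun e he => ?_) ?_
  · exact hw e ((Finset.mem_filter.1 hF).2.1.1 (by exact_mod_cast he))
  · obtain ⟨F, hFG, hF⟩ := exists_rootedForest G hG _ (Finset.univ.image node)
      ⟨node k, Finset.mem_image_of_mem _ (Finset.mem_univ _)⟩ rfl
    exact ⟨F, Finset.mem_filter.2
      ⟨Finset.mem_univ _, (grove_uncrossing_iff G node hnode F hFG).2 hF⟩⟩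

/-! ### The Schur complement -/

/-- Splitting of the vertices other than `node k` into the remaining nodes and the inner
vertices. -/
noncomputable def otherVxEquiv {V : Type} [Fintype V] [DecidableEq V] {n : ℕ}
    (node : Fin n → V) (hnode : Function.Injective node) (k : Fin n) :
    {i : Fin n // i ≠ k} ⊕ InnerVx node ≃ {v : V // ¬ v ∈ ({node k} : Finset V)} :=
  Equiv.ofBijective
    (Sum.elim (fun i => ⟨node i.1, by simpa using fun h => i.2 (hnode h)⟩)
      (fun u => ⟨u.1, by simpa using fun h => u.2 k h.symm⟩)) (by
    constructor
    · rintro (i | u) (j | v) h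
      · exact congrArg Sum.inl (Subtype.ext (hnode (congrArg Subtype.val h)))
      · exact absurd (congrArg Subtype.val h) (v.2 i)
      · exact absurd (congrArg Subtype.val h).symm (u.2 j)
      · have huv : u.1 = v.1 := Subtype.mk.inj h
        exact congrArg Sum.inr (Subtype.ext huv)
    · rintro ⟨v, hv⟩
      by_cases h : ∃ i, node i = v
      · obtain ⟨i, rfl⟩ := h
        exact ⟨Sum.inl ⟨i, fun hik => hv (by simp [hik])⟩, rfl⟩
      · exact ⟨Sum.inr ⟨v, fun i hi => h ⟨i, hi⟩⟩, rfl⟩)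

/-
STATEMENT 5: Let G be a finite connected graph with positive real edge weights and n ≥ 1
distinct nodes labeled 1,…,n.  Then Z(tree) = Z(uncrossing) · det Λ̃, where Λ̃ is obtained
from the response matrix Λ of (G,nodes) by deleting any one row and the corresponding
column.

Here Z(tree) = Zgrove G w node ⊤ (the one-part partition) and
Z(uncrossing) = Zgrove G w node ⊥ (the all-singletons partition); deleting row and
column k is realised by restricting the index type to {i : Fin n // i ≠ k}.
-/
theorem tree_over_uncrossing_eq_det_response
    {V : Type} [Fintype V] [DecidableEq V] (G : SimpleGraph V) (hG : G.Connected)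
    (w : Sym2 V → ℝ) (hw : ∀ e ∈ G.edgeSet, 0 < w e)
    (n : ℕ) (hn : 1 ≤ n) (node : Fin n → V) (hnode : Function.Injective node)
    (k : Fin n) :
    Zgrove G w node ⊤ =
      Zgrove G w node ⊥ *
        Matrix.det
          ((responseMatrix G w node).submatrix
            (Subtype.val : {i : Fin n // i ≠ k} → Fin n)
            (Subtype.val : {i : Fin n // i ≠ k} → Fin n)) := by
  set K : Matrix (InnerVx node) (InnerVx node) ℝ :=
    Matrix.of fun u v => lapMatrix' G w u.val v.val
  have hbot : Zgrove G w node ⊥ = K.det := by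
    rw [Zgrove_eq_det G w node ⊥ _ (grove_uncrossing_iff G node hnode)]
    let e : InnerVx node ≃ {v : V // ¬ v ∈ Finset.univ.image node} :=
      Equiv.subtypeEquivRight fun v => by simp
    rw [← Matrix.det_submatrix_equiv_self e]
    rfl
  have hKdet : K.det ≠ 0 := hbot ▸ (Zgrove_uncrossing_pos G hG w hw node hnode k).ne'
  let _ : Invertible K := Matrix.invertibleOfIsUnitDet K (isUnit_iff_ne_zero.2 hKdet)
  rw [Zgrove_eq_det G w node ⊤ _ (grove_tree_iff G node k), hbot,
    ← Matrix.det_submatrix_equiv_self (otherVxEquiv node hnode k)]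
  have hblocks : ((lapMatrix' G w).submatrix Subtype.val Subtype.val).submatrix
      (otherVxEquiv node hnode k) (otherVxEquiv node hnode k) =
      Matrix.fromBlocks
        (Matrix.of fun i j : {i : Fin n // i ≠ k} => lapMatrix' G w (node i) (node j))
        (Matrix.of fun (i : {i : Fin n // i ≠ k}) (u : InnerVx node) =>
          lapMatrix' G w (node i) u.val)
        (Matrix.of fun (u : InnerVx node) (j : {i : Fin n // i ≠ k}) =>
          lapMatrix' G w u.val (node j)) K := by
    ext (i | u) (j | v) <;> rfl
  rw [hblocks, Matrix.det_fromBlocks₂₂, Matrix.invOf_eq_nonsing_inv]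
  rfl
end

section
/- Let G be a finite connected graph with positive real edge weights and n ≥ 2 distinct distinguished vertices (nodes) labeled 1,…,n, and let i ≠ j be two node labels. Then Z(σ_{i,j}) = L_{i,j} · Z(uncrossing), where σ_{i,j} is the partition of {1,…,n} whose only non-singleton part is {i,j}. -/
/-! ### Orbits of a self-map -/

/-- The forward orbit of `x` under `f` meets `y`. -/
def Leads {V : Type} (f : V → V) (x y : V) : Prop := ∃ k : ℕ, f^[k] x = y

section Orbits

variable {V : Type} {f : V → V} {x y u v : V}

theorem Leads.refl (f : V → V) (x : V) : Leads f x x := ⟨0, rfl⟩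

theorem Leads.trans {z : V} (h : Leads f x y) (h' : Leads f y z) : Leads f x z := by
  obtain ⟨k, rfl⟩ := h
  obtain ⟨m, rfl⟩ := h'
  exact ⟨m + k, Function.iterate_add_apply f m k x⟩

theorem leads_apply (f : V → V) (x : V) : Leads f x (f x) := ⟨1, rfl⟩

theorem leads_iff_of_ne (h : x ≠ y) : Leads f x y ↔ Leads f (f x) y := by
  refine ⟨?_, fun h' => (leads_apply f x).trans h'⟩
  rintro ⟨k, hk⟩
  cases k with
  | zero => exact absurd hk h
  | succ k => exact ⟨k, hk⟩

theorem Leads.eq_of_fixed (hx : f x = x) (h : Leads f x y) : x = y := by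
  obtain ⟨k, rfl⟩ := h
  exact (Function.iterate_fixed hx k).symm

/-- An orbit is eventually constant at a fixed point, so it meets at most one of them. -/
theorem Leads.unique (hx : f x = x) (hy : f y = y) (h : Leads f u x) (h' : Leads f u y) :
    x = y := by
  obtain ⟨k, rfl⟩ := h
  obtain ⟨m, rfl⟩ := h'
  rw [← Function.iterate_fixed hx m, ← Function.iterate_fixed hy k,
    ← Function.iterate_add_apply, ← Function.iterate_add_apply, add_comm]

theorem leads_apply_iff_of_fixed (hy : f y = y) : Leads f x y ↔ Leads f (f x) y := by
  by_cases h : x = y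
  · subst h
    rw [hy]
  · exact leads_iff_of_ne h

/-- A periodic point whose orbit meets a fixed point is that fixed point. -/
theorem Leads.eq_of_periodic (hy : f y = y) (h : Leads f x y) (hp : Leads f (f x) x) :
    x = y := by
  obtain ⟨m, hm⟩ := h
  obtain ⟨k, hk⟩ := hp
  have hper : Function.IsPeriodicPt f (k + 1) x := hk
  have h1 : f^[(k + 1) * m] x = x := hper.mul_const m
  have h2 : f^[(k + 1) * m] x = y := by
    rw [show (k + 1) * m = k * m + m by ring, Function.iterate_add_apply, hm,
      Function.iterate_fixed hy]
  exact h1.symm.trans h2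

variable [DecidableEq V]

/-- Changing `f` at a point off the orbit of `x` does not change that orbit. -/
theorem iterate_update_of_not_leads (h : ¬ Leads f x u) (k : ℕ) :
    (Function.update f u v)^[k] x = f^[k] x := by
  induction k with
  | zero => rfl
  | succ k ih =>
    rw [Function.iterate_succ_apply', Function.iterate_succ_apply', ih,
      Function.update_of_ne (fun h' => h ⟨k, h'⟩)]

theorem leads_update_iff (h : ¬ Leads f x u) :
    Leads (Function.update f u v) x y ↔ Leads f x y := by
  simp only [Leads, iterate_update_of_not_leads h]

/-- Changing `f` at `u` does not affect which points have `u` on their orbit. -/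
theorem Leads.update (h : Leads f x u) : Leads (Function.update f u v) x u := by
  by_contra h'
  exact h' ((leads_update_iff (v := f u) (y := u) h').mp (by
    rwa [Function.update_idem, Function.update_eq_self]))

end Orbits

/-! ### Rooted forests as parent functions -/

/-- `f` is the parent function of a spanning forest of `G` rooted at `R`: roots are their own
parents, every other vertex is adjacent to its parent, and passing to parents leads to a root. -/
def IsParent {V : Type} (G : SimpleGraph V) (R : Finset V) (f : V → V) : Prop :=
  (∀ r ∈ R, f r = r) ∧ (∀ u ∉ R, G.Adj u (f u)) ∧ ∀ x, ∃ r ∈ R, Leads f x r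

/-- `F` is a spanning forest of `G` each of whose components contains exactly one vertex
of `R`. -/
def IsRootedForest_s6 {V : Type} (G : SimpleGraph V) (R : Finset V) (F : Finset (Sym2 V)) : Prop :=
  (F : Set (Sym2 V)) ⊆ G.edgeSet ∧ (groveGraph F).IsAcyclic ∧
    (∀ v, ∃ r ∈ R, (groveGraph F).Reachable v r) ∧
    ∀ r ∈ R, ∀ t ∈ R, (groveGraph F).Reachable r t → r = t

/-- The edges joining the non-roots to their parents. -/
def parentEdges {V : Type} [Fintype V] [DecidableEq V] (R : Finset V) (f : V → V) :
    Finset (Sym2 V) :=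
  Rᶜ.image fun u => s(u, f u)

/-- The product of the weights of the edges from non-roots to their parents. -/
noncomputable def parentWeight {V : Type} [Fintype V] [DecidableEq V] (w : Sym2 V → ℝ)
    (R : Finset V) (f : V → V) : ℝ :=
  ∏ u ∈ Rᶜ, w s(u, f u)

theorem reachable_invariant {V : Type} {H : SimpleGraph V} {P : V → Prop}
    (hP : ∀ x y, H.Adj x y → (P x ↔ P y)) {x y : V} (h : H.Reachable x y) : P x ↔ P y := by
  obtain ⟨p⟩ := h
  induction p with
  | nil => rfl
  | cons hadj _ ih => exact (hP _ _ hadj).trans ih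

theorem IsParent.not_leads {V : Type} {G : SimpleGraph V} {R : Finset V}
    {f : V → V} (hf : IsParent G R f) {u : V} (hu : u ∉ R) :
    ¬ Leads f (f u) u := by
  intro h
  obtain ⟨r, hr, hl⟩ := hf.2.2 u
  exact hu (hl.eq_of_periodic (hf.1 r hr) h ▸ hr)

section Parent

variable {V : Type} [Fintype V] [DecidableEq V] {G : SimpleGraph V} {R : Finset V}
  {f g : V → V}

theorem groveGraph_parentEdges_adj {x y : V} :
    (groveGraph (parentEdges R f)).Adj x y ↔
      x ≠ y ∧ ((x ∉ R ∧ f x = y) ∨ (y ∉ R ∧ f y = x)) := by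
  simp only [groveGraph, parentEdges, SimpleGraph.fromEdgeSet_adj, Finset.coe_image,
    Set.mem_image, Finset.mem_coe, Finset.mem_compl, Sym2.eq_iff]
  grind

theorem IsParent.adj_apply (hf : IsParent G R f) {u : V} (hu : u ∉ R) :
    (groveGraph (parentEdges R f)).Adj u (f u) :=
  groveGraph_parentEdges_adj.2 ⟨(hf.2.1 u hu).ne, Or.inl ⟨hu, rfl⟩⟩

theorem IsParent.reachable_of_leads (hf : IsParent G R f) {x y : V} (h : Leads f x y) :
    (groveGraph (parentEdges R f)).Reachable x y := by
  obtain ⟨k, rfl⟩ := h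
  induction k with
  | zero => exact SimpleGraph.Reachable.refl _
  | succ k ih =>
    rw [Function.iterate_succ_apply']
    by_cases hR : f^[k] x ∈ R
    · rwa [hf.1 _ hR]
    · exact ih.trans (hf.adj_apply hR).reachable

/-- In the forest of a parent function, the component of a root consists of the vertices whose
orbit ends at that root. -/
theorem IsParent.reachable_iff (hf : IsParent G R f) {x r : V} (hr : r ∈ R) :
    (groveGraph (parentEdges R f)).Reachable x r ↔ Leads f x r := by
  refine ⟨fun h => ?_, hf.reachable_of_leads⟩
  refine (reachable_invariant (P := fun z => Leads f z r) ?_ h).2 (Leads.refl f r)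
  intro a b hab
  obtain ⟨-, ⟨-, rfl⟩ | ⟨-, rfl⟩⟩ := groveGraph_parentEdges_adj.1 hab
  · exact leads_apply_iff_of_fixed (hf.1 r hr)
  · exact (leads_apply_iff_of_fixed (hf.1 r hr)).symm

/-- Every edge `s(u, f u)` is a bridge: having `u` on one's orbit is invariant under all other
edges, holds at `u`, and fails at `f u`. -/
theorem IsParent.isAcyclic (hf : IsParent G R f) :
    (groveGraph (parentEdges R f)).IsAcyclic := by
  rw [SimpleGraph.isAcyclic_iff_forall_adj_isBridge]
  have key : ∀ u ∉ R, (groveGraph (parentEdges R f)).IsBridge s(u, f u) := by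
    intro u hu
    rw [SimpleGraph.isBridge_iff]
    intro h
    refine hf.not_leads hu ((reachable_invariant (P := fun z => Leads f z u) ?_ h).1
      (Leads.refl f u))
    intro a b hab
    rw [SimpleGraph.deleteEdges_adj] at hab
    obtain ⟨hab, hne⟩ := hab
    obtain ⟨-, ⟨-, rfl⟩ | ⟨-, rfl⟩⟩ := groveGraph_parentEdges_adj.1 hab
    · exact leads_iff_of_ne (by rintro rfl; exact hne rfl)
    · exact (leads_iff_of_ne (by rintro rfl; exact hne Sym2.eq_swap)).symm
  intro x y hxy
  obtain ⟨-, ⟨hx, rfl⟩ | ⟨hy, rfl⟩⟩ := groveGraph_parentEdges_adj.1 hxy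
  · exact key x hx
  · rw [Sym2.eq_swap]
    exact key y hy

theorem IsParent.isRootedForest (hf : IsParent G R f) :
    IsRootedForest_s6 G R (parentEdges R f) := by
  refine ⟨?_, hf.isAcyclic, fun v => ?_, fun r hr r' hr' h => ?_⟩
  · intro e he
    simp only [parentEdges, Finset.coe_image, Set.mem_image, Finset.mem_coe,
      Finset.mem_compl] at he
    obtain ⟨u, hu, rfl⟩ := he
    exact hf.2.1 u hu
  · obtain ⟨r, hr, h⟩ := hf.2.2 v
    exact ⟨r, hr, hf.reachable_of_leads h⟩
  · exact ((hf.reachable_iff hr').1 h).eq_of_fixed (hf.1 r hr)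

theorem IsParent.prod_parentEdges (hf : IsParent G R f) (w : Sym2 V → ℝ) :
    ∏ e ∈ parentEdges R f, w e = parentWeight w R f := by
  refine Finset.prod_image fun u hu v hv h => ?_
  rw [Finset.coe_compl, Set.mem_compl_iff, Finset.mem_coe] at hu hv
  rcases Sym2.eq_iff.1 h with ⟨h, -⟩ | ⟨h1, h2⟩
  · exact h
  · exact absurd ⟨1, by rw [h2]; exact h1.symm⟩ (hf.not_leads hu)

/-- If `f` and `g` have the same edges and differ at `z`, then `f (g z) = z`, so they also differ
at `g z`; following the orbit of `z` under `g` this contradicts that they agree at roots. -/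
theorem IsParent.injOn_parentEdges (hf : IsParent G R f) (hg : IsParent G R g)
    (h : parentEdges R f = parentEdges R g) : f = g := by
  have step : ∀ z, f z ≠ g z → f (g z) ≠ g (g z) := by
    intro z hz
    have hzR : z ∉ R := fun hR => hz ((hf.1 z hR).trans (hg.1 z hR).symm)
    have hadj := hg.adj_apply hzR
    rw [← h] at hadj
    obtain ⟨-, ⟨-, h1⟩ | ⟨-, h1⟩⟩ := groveGraph_parentEdges_adj.1 hadj
    · exact absurd h1 hz
    · intro h2
      exact hg.not_leads hzR ⟨1, h2.symm.trans h1⟩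
  funext z
  by_contra hz
  obtain ⟨r, hr, k, hk⟩ := hg.2.2 z
  have : ∀ k, f (g^[k] z) ≠ g (g^[k] z) := by
    intro k
    induction k with
    | zero => exact hz
    | succ k ih =>
      rw [Function.iterate_succ_apply']
      exact step _ ih
  exact this k (by rw [hk, hf.1 r hr, hg.1 r hr])

/-- Every rooted forest arises from a parent function: the parent of a non-root is a neighbour
closer to its root. All edges are obtained, as each edge of a forest is a bridge. -/
theorem IsRootedForest_s6.exists_parent {F : Finset (Sym2 V)} (hF : IsRootedForest_s6 G R F) :
    ∃ f, IsParent G R f ∧ parentEdges R f = F := by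
  obtain ⟨hFG, hac, hex, huniq⟩ := hF
  choose root hroot hreach using hex
  have hstep : ∀ u, u ∉ R → ∃ v, (groveGraph F).Adj u v ∧
      (groveGraph F).dist v (root v) < (groveGraph F).dist u (root u) := by
    intro u hu
    obtain ⟨p, hp⟩ := (hreach u).exists_walk_length_eq_dist
    have hρ := hroot u
    generalize root u = ρ at p hp hρ ⊢
    cases p with
    | nil => exact absurd hρ hu
    | @cons _ v _ hadj q =>
      have hr : root v = ρ :=
        huniq _ (hroot v) _ hρ ((hreach v).symm.trans q.reachable)
      refine ⟨v, hadj, ?_⟩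
      rw [hr, ← hp, SimpleGraph.Walk.length_cons]
      exact Nat.lt_succ_of_le (SimpleGraph.dist_le q)
  choose! par hadj hlt using hstep
  classical
  let f : V → V := fun u => if u ∈ R then u else par u
  have hfR : ∀ r ∈ R, f r = r := fun r hr => if_pos hr
  have hfn : ∀ u ∉ R, f u = par u := fun r hr => if_neg hr
  have hf : IsParent G R f := by
    refine ⟨hfR, fun u hu => ?_, ?_⟩
    · rw [hfn u hu]
      have h := hadj u hu
      rw [groveGraph, SimpleGraph.fromEdgeSet_adj] at h
      exact hFG h.1
    · suffices ∀ m x, (groveGraph F).dist x (root x) = m → ∃ r ∈ R, Leads f x r from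
        fun x => this _ x rfl
      intro m
      induction m using Nat.strong_induction_on with
      | _ m ih =>
        intro x hx
        by_cases hxR : x ∈ R
        · exact ⟨x, hxR, Leads.refl f x⟩
        · obtain ⟨r, hr, hl⟩ := ih _ (hx ▸ hlt x hxR) _ rfl
          refine ⟨r, hr, (leads_apply f x).trans ?_⟩
          rwa [hfn x hxR]
  have hsub : parentEdges R f ⊆ F := by
    intro e he
    simp only [parentEdges, Finset.mem_image, Finset.mem_compl] at he
    obtain ⟨u, hu, rfl⟩ := he
    have h := hadj u hu
    rw [groveGraph, SimpleGraph.fromEdgeSet_adj] at h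
    rw [hfn u hu]
    exact h.1
  refine ⟨f, hf, hsub.antisymm fun e => ?_⟩
  induction e with
  | _ x y =>
  intro he
  by_contra hne
  have hxy : (groveGraph F).Adj x y := by
    rw [groveGraph, SimpleGraph.fromEdgeSet_adj]
    exact ⟨he, (hFG he : G.Adj x y).ne⟩
  have hle : groveGraph (parentEdges R f) ≤ (groveGraph F).deleteEdges {s(x, y)} := by
    intro a b hab
    rw [SimpleGraph.deleteEdges_adj]
    rw [groveGraph, SimpleGraph.fromEdgeSet_adj] at hab
    refine ⟨?_, fun h => hne ((Set.mem_singleton_iff.1 h) ▸ hab.1)⟩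
    rw [groveGraph, SimpleGraph.fromEdgeSet_adj]
    exact ⟨hsub hab.1, hab.2⟩
  have hle' : groveGraph (parentEdges R f) ≤ groveGraph F :=
    hle.trans (SimpleGraph.deleteEdges_le _)
  obtain ⟨r, hr, hrl⟩ := hf.2.2 x
  obtain ⟨r', hr', hrl'⟩ := hf.2.2 y
  have hx := hf.reachable_of_leads hrl
  have hy := hf.reachable_of_leads hrl'
  have hrr : r = r' := huniq r hr r' hr'
    (((hx.mono hle').symm.trans hxy.reachable).trans (hy.mono hle'))
  subst hrr
  exact SimpleGraph.isAcyclic_iff_forall_adj_isBridge.1 hac hxy ((hx.trans hy.symm).mono hle)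

open Classical in
/-- Weighted sums over rooted forests are weighted sums over parent functions. -/
theorem sum_rootedForest_eq (w : Sym2 V → ℝ) {a b : V} (hb : b ∈ R) :
    ∑ F ∈ Finset.univ.filter (fun F : Finset (Sym2 V) =>
        IsRootedForest_s6 G R F ∧ (groveGraph F).Reachable a b), ∏ e ∈ F, w e =
      ∑ f ∈ Finset.univ.filter (fun f : V → V => IsParent G R f ∧ Leads f a b),
        parentWeight w R f := by
  symm
  refine Finset.sum_bij (fun f _ => parentEdges R f) ?_ ?_ ?_ ?_
  · intro f hf
    simp only [Finset.mem_filter, Finset.mem_univ, true_and] at hf ⊢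
    exact ⟨hf.1.isRootedForest, (hf.1.reachable_iff hb).2 hf.2⟩
  · intro f hf g hg h
    simp only [Finset.mem_filter, Finset.mem_univ, true_and] at hf hg
    exact hf.1.injOn_parentEdges hg.1 h
  · intro F hF
    simp only [Finset.mem_filter, Finset.mem_univ, true_and] at hF
    obtain ⟨f, hf, rfl⟩ := hF.1.exists_parent
    refine ⟨f, ?_, rfl⟩
    simp only [Finset.mem_filter, Finset.mem_univ, true_and]
    exact ⟨hf, (hf.reachable_iff hb).1 hF.2⟩
  · intro f hf
    simp only [Finset.mem_filter, Finset.mem_univ, true_and] at hf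
    exact (hf.1.prod_parentEdges w).symm

end Parent
/-! ### Redirecting one edge -/

section Redirect

variable {V : Type} [DecidableEq V] {G : SimpleGraph V} {R : Finset V}
  {f : V → V}

theorem IsParent.update (hf : IsParent G R f) {u v : V} (hu : u ∉ R) (huv : G.Adj u v)
    (hv : ¬ Leads f v u) : IsParent G R (Function.update f u v) := by
  have hleads : ∀ x, ¬ Leads f x u → ∃ r ∈ R, Leads (Function.update f u v) x r := by
    intro x hx
    obtain ⟨r, hr, h⟩ := hf.2.2 x
    exact ⟨r, hr, (leads_update_iff hx).2 h⟩
  refine ⟨fun r hr => ?_, fun x hx => ?_, fun x => ?_⟩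
  · rw [Function.update_of_ne (by rintro rfl; exact hu hr), hf.1 r hr]
  · by_cases h : x = u
    · subst h
      rwa [Function.update_self]
    · rw [Function.update_of_ne h]
      exact hf.2.1 x hx
  · by_cases hx : Leads f x u
    · obtain ⟨r, hr, h⟩ := hleads v hv
      refine ⟨r, hr, hx.update.trans (Leads.trans ?_ h)⟩
      have := leads_apply (Function.update f u v) u
      rwa [Function.update_self] at this
    · exact hleads x hx

variable [Fintype V]

theorem parentWeight_update (w : Sym2 V → ℝ) {u v : V} (hu : u ∉ R) :
    parentWeight w R (Function.update f u v) * w s(u, f u) = parentWeight w R f * w s(u, v) := by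
  have hu' : u ∈ Rᶜ := Finset.mem_compl.2 hu
  have h : ∀ g : V → V, parentWeight w R g =
      w s(u, g u) * ∏ x ∈ Rᶜ.erase u, w s(x, g x) := fun g =>
    (Finset.mul_prod_erase _ (fun x => w s(x, g x)) hu').symm
  rw [h, h f, Function.update_self]
  have : ∏ x ∈ Rᶜ.erase u, w s(x, Function.update f u v x) = ∏ x ∈ Rᶜ.erase u, w s(x, f x) :=
    Finset.prod_congr rfl fun x hx => by
      rw [Function.update_of_ne (Finset.ne_of_mem_erase hx)]
  rw [this]
  ring

open Classical in
/-- The weight of the edge `s(u, v)`, or `0` when it is not an edge of `G`. -/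
noncomputable def conductance {V : Type} (G : SimpleGraph V) (w : Sym2 V → ℝ) (u v : V) : ℝ :=
  if G.Adj u v then w s(u, v) else 0

open Classical in
/-- The weighted count of forests rooted at `R` in which `x` lies in the component of `b`. -/
noncomputable def rootedSum {V : Type} [Fintype V] [DecidableEq V] (G : SimpleGraph V)
    (w : Sym2 V → ℝ) (R : Finset V) (x b : V) : ℝ :=
  ∑ f ∈ Finset.univ.filter (fun f : V → V => IsParent G R f ∧ Leads f x b), parentWeight w R f

/-- `x ↦ rootedSum G w R x b` is harmonic off the roots. Expanding the Laplacian gives a sum over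
pairs `(f, v)` with `v` adjacent to `u`. The pairs in which `v` descends from `u` contribute
nothing, and on the others `(f, v) ↦ (update f u v, f u)` is an involution that preserves the
weight and exchanges the roles of `u` and `v`. -/
theorem rootedSum_harmonic (w : Sym2 V → ℝ) {u b : V} (hu : u ∉ R) (hb : b ∈ R) :
    ∑ v, conductance G w u v * (rootedSum G w R u b - rootedSum G w R v b) = 0 := by
  classical
  let ind : (V → V) → V → ℝ := fun f x => if Leads f x b then 1 else 0
  have hH : ∀ x, rootedSum G w R x b =
      ∑ f ∈ Finset.univ.filter (fun f : V → V => IsParent G R f),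
        parentWeight w R f * ind f x := by
    intro x
    simp only [rootedSum, ind, mul_ite, mul_one, mul_zero]
    rw [← Finset.sum_filter, Finset.filter_filter]
  let T : (V → V) × V → ℝ := fun p =>
    parentWeight w R p.1 * w s(u, p.2) * (ind p.1 u - ind p.1 p.2)
  have hexp : ∑ v, conductance G w u v * (rootedSum G w R u b - rootedSum G w R v b) =
      ∑ p ∈ Finset.univ.filter (fun p : (V → V) × V =>
        IsParent G R p.1 ∧ G.Adj u p.2 ∧ ¬ Leads p.1 p.2 u), T p := by
    have h1 : ∀ v, conductance G w u v * (rootedSum G w R u b - rootedSum G w R v b) =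
        ∑ f, if IsParent G R f ∧ G.Adj u v ∧ ¬ Leads f v u then T (f, v) else 0 := by
      intro v
      rw [hH, hH, ← Finset.sum_sub_distrib, Finset.mul_sum, Finset.sum_filter]
      refine Finset.sum_congr rfl fun f _ => ?_
      by_cases hf : IsParent G R f
      · by_cases hadj : G.Adj u v
        · by_cases hl : Leads f v u
          · have : ind f u = ind f v := by
              have hiff : Leads f u b ↔ Leads f v b := by
                refine ⟨hl.trans, fun h => ?_⟩
                obtain ⟨r, hr, hur⟩ := hf.2.2 u
                rwa [h.unique (hf.1 b hb) (hf.1 r hr) (hl.trans hur)]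
              simp only [ind, hiff]
            simp [hf, hadj, hl, this]
          · simp only [hf, hadj, hl, conductance, T, if_true, not_false_iff, and_self]
            ring
        · simp [conductance, hadj]
      · simp [hf]
    simp only [h1]
    rw [Finset.sum_comm, Finset.sum_filter, Fintype.sum_prod_type]
  rw [hexp]
  -- The indicators at the image of a pair are those of the pair, exchanged.
  have hswap : ∀ f v, IsParent G R f → ¬ Leads f v u →
      ind (Function.update f u v) u = ind f v ∧
        ind (Function.update f u v) (f u) = ind f u := by
    intro f v hf hv
    have hub : u ≠ b := by rintro rfl; exact hu hb
    have e1 : Leads (Function.update f u v) u b ↔ Leads f v b := by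
      rw [leads_iff_of_ne hub, Function.update_self, leads_update_iff hv]
    have e2 : Leads (Function.update f u v) (f u) b ↔ Leads f u b := by
      rw [leads_update_iff (hf.not_leads hu), ← leads_iff_of_ne hub]
    simp only [ind, e1, e2, and_self]
  refine Finset.sum_involution (fun p _ => (Function.update p.1 u p.2, p.1 u)) ?_ ?_ ?_ ?_
  · rintro ⟨f, v⟩ hp
    simp only [Finset.mem_filter, Finset.mem_univ, true_and] at hp
    obtain ⟨e1, e2⟩ := hswap f v hp.1 hp.2.2
    simp only [T, e1, e2, parentWeight_update w hu]
    ring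
  · rintro ⟨f, v⟩ hp hne heq
    simp only [Finset.mem_filter, Finset.mem_univ, true_and] at hp
    obtain ⟨e1, e2⟩ := hswap f v hp.1 hp.2.2
    simp only [Prod.mk.injEq] at heq
    rw [heq.1] at e1
    apply hne
    simp only [T, e1, sub_self, mul_zero]
  · rintro ⟨f, v⟩ hp
    simp only [Finset.mem_filter, Finset.mem_univ, true_and] at hp ⊢
    refine ⟨hp.1.update hu hp.2.1 hp.2.2, hp.1.2.1 u hu, ?_⟩
    rw [leads_update_iff (hp.1.not_leads hu)]
    exact hp.1.not_leads hu
  · rintro ⟨f, v⟩ hp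
    simp

open Classical in
/-- A forest rooted at `R \ {a}` in which `a` lies in the component of `b` is a forest rooted at
`R` together with an edge from `a` to a vertex in the component of `b`. -/
theorem rootedSum_erase (w : Sym2 V → ℝ) {a b : V} (ha : a ∈ R) (hb : b ∈ R) (hab : a ≠ b) :
    rootedSum G w (R.erase a) a b = ∑ v, conductance G w a v * rootedSum G w R v b := by
  have hrhs : ∑ v, conductance G w a v * rootedSum G w R v b =
      ∑ p ∈ Finset.univ.filter (fun p : (V → V) × V =>
        IsParent G R p.1 ∧ G.Adj a p.2 ∧ Leads p.1 p.2 b),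
        w s(a, p.2) * parentWeight w R p.1 := by
    rw [Finset.sum_filter, Fintype.sum_prod_type, Finset.sum_comm]
    refine Finset.sum_congr rfl fun v _ => ?_
    rw [rootedSum, Finset.mul_sum, Finset.sum_filter]
    refine Finset.sum_congr rfl fun f _ => ?_
    by_cases hadj : G.Adj a v <;> simp [conductance, hadj]
  have haE : a ∉ R.erase a := Finset.notMem_erase a R
  rw [hrhs, rootedSum]
  refine Finset.sum_bij' (fun f _ => (Function.update f a a, f a))
    (fun p _ => Function.update p.1 a p.2) ?_ ?_ ?_ ?_ ?_
  · intro f hf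
    simp only [Finset.mem_filter, Finset.mem_univ, true_and] at hf ⊢
    obtain ⟨hf, hl⟩ := hf
    refine ⟨⟨fun r hr => ?_, fun x hx => ?_, fun x => ?_⟩, hf.2.1 a haE, ?_⟩
    · by_cases h : r = a
      · rw [h, Function.update_self]
      · rw [Function.update_of_ne h]
        exact hf.1 r (Finset.mem_erase.2 ⟨h, hr⟩)
    · rw [Function.update_of_ne (by rintro rfl; exact hx ha)]
      exact hf.2.1 x fun h => hx (Finset.mem_of_mem_erase h)
    · by_cases hx : Leads f x a
      · exact ⟨a, ha, hx.update⟩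
      · obtain ⟨r, hr, h⟩ := hf.2.2 x
        exact ⟨r, Finset.mem_of_mem_erase hr, (leads_update_iff hx).2 h⟩
    · rw [leads_update_iff (hf.not_leads haE), ← leads_iff_of_ne hab]
      exact hl
  · rintro ⟨g, v⟩ hp
    simp only [Finset.mem_filter, Finset.mem_univ, true_and] at hp ⊢
    obtain ⟨hg, hadj, hl⟩ := hp
    have hva : ¬ Leads g v a := fun h => hab (h.unique (hg.1 a ha) (hg.1 b hb) hl)
    have hlead : Leads (Function.update g a v) a b := by
      rw [leads_iff_of_ne hab, Function.update_self, leads_update_iff hva]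
      exact hl
    refine ⟨⟨fun r hr => ?_, fun x hx => ?_, fun x => ?_⟩, hlead⟩
    · rw [Function.update_of_ne (Finset.ne_of_mem_erase hr)]
      exact hg.1 r (Finset.mem_of_mem_erase hr)
    · by_cases h : x = a
      · rw [h, Function.update_self]
        exact hadj
      · rw [Function.update_of_ne h]
        exact hg.2.1 x fun hR => hx (Finset.mem_erase.2 ⟨h, hR⟩)
    · by_cases hx : Leads g x a
      · exact ⟨b, Finset.mem_erase.2 ⟨hab.symm, hb⟩, hx.update.trans hlead⟩
      · obtain ⟨r, hr, h⟩ := hg.2.2 x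
        refine ⟨r, Finset.mem_erase.2 ⟨?_, hr⟩, (leads_update_iff hx).2 h⟩
        rintro rfl
        exact hx h
  · intro f _
    simp
  · rintro ⟨g, v⟩ hp
    simp only [Finset.mem_filter, Finset.mem_univ, true_and] at hp
    have : Function.update g a a = g := by
      rw [Function.update_eq_self_iff, hp.1.1 a ha]
    simp [this]
  · intro f _
    simp only [parentWeight]
    have hc : (R.erase a)ᶜ = insert a Rᶜ := by
      ext x
      simp only [Finset.mem_compl, Finset.mem_erase, Finset.mem_insert]
      tauto
    rw [hc, Finset.prod_insert (by simpa using ha)]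
    congr 1
    refine Finset.prod_congr rfl fun x hx => ?_
    rw [Function.update_of_ne (by rintro rfl; exact Finset.mem_compl.1 hx ha)]

end Redirect
/-! ### Groves as rooted forests -/

section Groves

variable {V : Type} [DecidableEq V] {n : ℕ}

theorem isGrove_bot_iff (G : SimpleGraph V) (node : Fin n → V) (hnode : Function.Injective node)
    (F : Finset (Sym2 V)) :
    (IsGrove G node F ∧ connSetoid node F = ⊥) ↔
      IsRootedForest_s6 G (Finset.univ.image node) F := by
  have hconn : connSetoid node F = ⊥ ↔
      ∀ a b, (groveGraph F).Reachable (node a) (node b) → a = b := by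
    refine ⟨fun h a b hab => ?_, fun h => ?_⟩
    · have hab' : (connSetoid node F) a b := hab
      rw [h] at hab'
      exact hab'
    · refine le_bot_iff.1 fun a b hab => h a b hab
  simp only [IsGrove, IsRootedForest_s6, hconn, Finset.exists_mem_image, Finset.forall_mem_image,
    Finset.mem_univ, true_and, forall_const, hnode.eq_iff, and_assoc]

theorem isGrove_pair_iff (G : SimpleGraph V) (node : Fin n → V) (hnode : Function.Injective node)
    {i j : Fin n} (hij : i ≠ j) (F : Finset (Sym2 V)) :
    (IsGrove G node F ∧
        connSetoid node F = Setoid.ker fun a : Fin n => if a = j then i else a) ↔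
      IsRootedForest_s6 G ((Finset.univ.image node).erase (node i)) F ∧
        (groveGraph F).Reachable (node i) (node j) := by
  have hmem : ∀ x, x ∈ (Finset.univ.image node).erase (node i) ↔ ∃ a, a ≠ i ∧ node a = x := by
    intro x
    simp only [Finset.mem_erase, Finset.mem_image, Finset.mem_univ, true_and]
    constructor
    · rintro ⟨h, a, rfl⟩
      exact ⟨a, fun h' => h (h' ▸ rfl), rfl⟩
    · rintro ⟨a, h, rfl⟩
      exact ⟨fun h' => h (hnode h'), a, rfl⟩
  have hconn : (connSetoid node F = Setoid.ker fun a : Fin n => if a = j then i else a) ↔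
      ∀ a b, (groveGraph F).Reachable (node a) (node b) ↔
        (if a = j then i else a) = (if b = j then i else b) := by
    rw [Setoid.ext_iff]
    rfl
  rw [hconn]
  constructor
  · rintro ⟨⟨hsub, hac, hex⟩, h⟩
    have hreach : (groveGraph F).Reachable (node i) (node j) := (h i j).2 (by simp)
    refine ⟨⟨hsub, hac, fun v => ?_, fun r hr r' hr' hrr => ?_⟩, hreach⟩
    · obtain ⟨a, ha⟩ := hex v
      by_cases hai : a = i
      · subst hai
        exact ⟨node j, (hmem _).2 ⟨j, hij.symm, rfl⟩, ha.trans hreach⟩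
      · exact ⟨node a, (hmem _).2 ⟨a, hai, rfl⟩, ha⟩
    · obtain ⟨a, ha, rfl⟩ := (hmem _).1 hr
      obtain ⟨b, hb, rfl⟩ := (hmem _).1 hr'
      have := (h a b).1 hrr
      congr 1
      grind
  · rintro ⟨⟨hsub, hac, hex, huniq⟩, hreach⟩
    refine ⟨⟨hsub, hac, fun v => ?_⟩, fun a b => ?_⟩
    · obtain ⟨r, hr, h⟩ := hex v
      obtain ⟨a, -, rfl⟩ := (hmem _).1 hr
      exact ⟨a, h⟩
    · -- Replacing the label `i` by `j` moves every node to a root of its component.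
      have hto : ∀ a, (groveGraph F).Reachable (node a) (node (if a = i then j else a)) := by
        intro a
        split_ifs with h
        · rw [h]
          exact hreach
        · exact SimpleGraph.Reachable.refl _
      have hin : ∀ a, node (if a = i then j else a) ∈
          (Finset.univ.image node).erase (node i) := by
        intro a
        refine (hmem _).2 ⟨_, ?_, rfl⟩
        grind
      constructor
      · intro hab
        have := hnode (huniq _ (hin a) _ (hin b) (((hto a).symm.trans hab).trans (hto b)))
        grind
      · intro hab
        have : (if a = i then j else a) = (if b = i then j else b) := by grind
        exact (this ▸ hto a).trans (hto b).symm

variable [Fintype V]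

theorem Zgrove_bot_eq (G : SimpleGraph V) (w : Sym2 V → ℝ) (node : Fin n → V)
    (hnode : Function.Injective node) (j : Fin n) :
    Zgrove G w node ⊥ = rootedSum G w (Finset.univ.image node) (node j) (node j) := by
  classical
  rw [rootedSum, ← sum_rootedForest_eq w (Finset.mem_image_of_mem node (Finset.mem_univ j)),
    Zgrove]
  refine Finset.sum_congr (Finset.filter_congr fun F _ => ?_) fun _ _ => rfl
  rw [isGrove_bot_iff G node hnode]
  exact ⟨fun h => ⟨h, SimpleGraph.Reachable.refl _⟩, fun h => h.1⟩

theorem Zgrove_pair_eq (G : SimpleGraph V) (w : Sym2 V → ℝ) (node : Fin n → V)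
    (hnode : Function.Injective node) {i j : Fin n} (hij : i ≠ j) :
    Zgrove G w node (Setoid.ker fun a : Fin n => if a = j then i else a) =
      ∑ v, conductance G w (node i) v *
        rootedSum G w (Finset.univ.image node) v (node j) := by
  classical
  have hmem : ∀ a, node a ∈ Finset.univ.image node := fun a =>
    Finset.mem_image_of_mem node (Finset.mem_univ a)
  rw [← rootedSum_erase w (hmem i) (hmem j) (hnode.ne hij), rootedSum,
    ← sum_rootedForest_eq w (Finset.mem_erase.2 ⟨hnode.ne hij.symm, hmem j⟩), Zgrove]
  refine Finset.sum_congr (Finset.filter_congr fun F _ => ?_) fun _ _ => rfl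
  exact isGrove_pair_iff G node hnode hij F

/-- The sum defining `rootedSum` is over all forests if `x` is the root `b`, and empty if `x` is
another root. -/
theorem rootedSum_node (G : SimpleGraph V) (w : Sym2 V → ℝ) (node : Fin n → V)
    (hnode : Function.Injective node) (k j : Fin n) :
    rootedSum G w (Finset.univ.image node) (node k) (node j) =
      if k = j then Zgrove G w node ⊥ else 0 := by
  classical
  split_ifs with h
  · rw [h, Zgrove_bot_eq G w node hnode]
  · rw [rootedSum, Finset.filter_eq_empty_iff.2, Finset.sum_empty]
    rintro f - ⟨hf, hl⟩
    exact h (hnode (hl.eq_of_fixed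
      (hf.1 _ (Finset.mem_image_of_mem node (Finset.mem_univ k)))))

end Groves

/-! ### The Dirichlet problem -/

/-- The maximum principle: a function on a connected graph that vanishes at the nodes and is
harmonic elsewhere is nonpositive, since the set where it is maximal is closed under adjacency
as long as the maximum is positive. -/
theorem harmonic_nonpos {V : Type} [Fintype V] (G : SimpleGraph V) (hG : G.Connected) (w : Sym2 V → ℝ)
    (hw : ∀ e ∈ G.edgeSet, 0 < w e) (R : Finset V) {r : V} (hr : r ∈ R) (x : V → ℝ)
    (hx : ∀ v ∈ R, x v = 0)
    (hh : ∀ u ∉ R, ∑ v, conductance G w u v * (x u - x v) = 0) (v : V) : x v ≤ 0 := by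
  classical
  obtain ⟨m, -, hm⟩ := Finset.exists_max_image Finset.univ x ⟨r, Finset.mem_univ r⟩
  by_contra! hv
  have hpos : 0 < x m := hv.trans_le (hm v (Finset.mem_univ v))
  have key : ∀ a b, G.Adj a b → x a = x m → x b = x m := by
    intro a b hab ha
    have haR : a ∉ R := fun h => by
      rw [hx a h] at ha
      exact hpos.ne ha
    have hnn : ∀ y ∈ Finset.univ, 0 ≤ conductance G w a y * (x a - x y) := by
      intro y hy
      refine mul_nonneg ?_ (by rw [ha]; exact sub_nonneg.2 (hm y hy))
      rw [conductance]
      split_ifs with h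
      · exact (hw _ h).le
      · exact le_rfl
    have h0 := (Finset.sum_eq_zero_iff_of_nonneg hnn).1 (hh a haR) b (Finset.mem_univ b)
    rw [conductance, if_pos hab] at h0
    have := (mul_eq_zero.1 h0).resolve_left (hw s(a, b) hab).ne'
    linarith
  have := (reachable_invariant (P := fun y => x y = x m)
    (fun a b hab => ⟨key a b hab, key b a hab.symm⟩) (hG m r)).1 rfl
  rw [hx r hr] at this
  exact hpos.ne this

section Dirichlet

variable {V : Type} [Fintype V] [DecidableEq V] {n : ℕ}

theorem lapMatrix'_mulVec (G : SimpleGraph V) (w : Sym2 V → ℝ) (x : V → ℝ) (u : V) :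
    ∑ v, lapMatrix' G w u v * x v = ∑ v, conductance G w u v * (x u - x v) := by
  have hd : ∀ v, lapMatrix' G w u v * x v =
      (if u = v then (∑ y, conductance G w u y) * x u else 0) - conductance G w u v * x v := by
    intro v
    by_cases h : u = v
    · subst h
      simp [lapMatrix', conductance]
    · simp [lapMatrix', conductance, h]
  simp only [hd, Finset.sum_sub_distrib, Finset.sum_ite_eq, Finset.mem_univ, if_true, mul_sub,
    Finset.sum_mul]

theorem sum_eq_sum_node_add_sum_inner (node : Fin n → V) (hnode : Function.Injective node)
    (φ : V → ℝ) : ∑ v, φ v = ∑ k, φ (node k) + ∑ u : InnerVx node, φ u.val := by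
  classical
  have h1 : ∑ k, φ (node k) = ∑ v ∈ Finset.univ.image node, φ v :=
    (Finset.sum_image fun a _ b _ h => hnode h).symm
  have h2 : ∑ u : InnerVx node, φ u.val = ∑ v ∈ (Finset.univ.image node)ᶜ, φ v :=
    (Finset.sum_subtype (p := fun v => ∀ i : Fin n, node i ≠ v) _ (by intro x; simp) φ).symm
  rw [h1, h2, Finset.sum_add_sum_compl]

/-- The block of the Laplacian indexed by the inner vertices. -/
noncomputable def innerBlock (G : SimpleGraph V) (w : Sym2 V → ℝ) (node : Fin n → V) :
    Matrix (InnerVx node) (InnerVx node) ℝ :=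
  Matrix.of fun u v => lapMatrix' G w u.val v.val

theorem isUnit_det_innerBlock (G : SimpleGraph V) (hG : G.Connected) (w : Sym2 V → ℝ)
    (hw : ∀ e ∈ G.edgeSet, 0 < w e) (node : Fin n → V) (hnode : Function.Injective node)
    (i : Fin n) : IsUnit (innerBlock G w node).det := by
  classical
  rw [isUnit_iff_ne_zero]
  intro hdet
  obtain ⟨y, hy, hKy⟩ := Matrix.exists_mulVec_eq_zero_iff.2 hdet
  apply hy
  have key : ∀ y : InnerVx node → ℝ, (innerBlock G w node).mulVec y = 0 → ∀ u, y u ≤ 0 := by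
    intro y hKy u
    let x : V → ℝ := fun v => if h : ∀ i : Fin n, node i ≠ v then y ⟨v, h⟩ else 0
    have hxn : ∀ k, x (node k) = 0 := fun k => dif_neg fun h => h k rfl
    have hxi : ∀ u : InnerVx node, x u.val = y u := fun u => dif_pos u.2
    rw [← hxi u]
    refine harmonic_nonpos G hG w hw (Finset.univ.image node)
      (Finset.mem_image_of_mem node (Finset.mem_univ i)) x ?_ ?_ u.val
    · intro v hv
      obtain ⟨k, -, rfl⟩ := Finset.mem_image.1 hv
      exact hxn k
    · intro v hv
      have hv' : ∀ i : Fin n, node i ≠ v := fun k hk =>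
        hv (Finset.mem_image.2 ⟨k, Finset.mem_univ k, hk⟩)
      rw [← lapMatrix'_mulVec, sum_eq_sum_node_add_sum_inner node hnode]
      simp only [hxn, hxi, mul_zero, Finset.sum_const_zero, zero_add]
      exact congrFun hKy ⟨v, hv'⟩
  funext u
  have h1 := key y hKy u
  have h2 := key (-y) (by rw [Matrix.mulVec_neg, hKy, neg_zero]) u
  rw [Pi.neg_apply] at h2
  exact le_antisymm h1 (neg_nonpos.1 h2)

end Dirichlet

/-
STATEMENT 6: Let G be a finite connected graph with positive real edge weights and n ≥ 2
distinct nodes labeled 1,…,n, and let i ≠ j.  Then Z(σ_{i,j}) = L_{i,j} · Z(uncrossing),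
where σ_{i,j} is the partition whose only non-singleton part is {i,j} and
L_{i,j} = −Λ_{i,j}.

σ_{i,j} is realised as the kernel of the map sending j to i and fixing everything else;
Z(uncrossing) = Zgrove G w node ⊥.
-/
theorem Z_pair_eq_L_mul_Z_uncrossing
    {V : Type} [Fintype V] [DecidableEq V] (G : SimpleGraph V) (hG : G.Connected)
    (w : Sym2 V → ℝ) (hw : ∀ e ∈ G.edgeSet, 0 < w e)
    (n : ℕ) (hn : 2 ≤ n) (node : Fin n → V) (hnode : Function.Injective node)
    (i j : Fin n) (hij : i ≠ j) :
    Zgrove G w node (Setoid.ker fun a : Fin n => if a = j then i else a) =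
      (-(responseMatrix G w node i j)) * Zgrove G w node ⊥ := by
  have hne : ∀ u : InnerVx node, u.val ∉ Finset.univ.image node := fun u hu => by
    obtain ⟨k, -, hk⟩ := Finset.mem_image.1 hu
    exact u.2 k hk
  set Z := Zgrove G w node ⊥ with hZ
  let H : V → ℝ := fun v => rootedSum G w (Finset.univ.image node) v (node j)
  have hHnode : ∀ k, H (node k) = if k = j then Z else 0 := fun k =>
    rootedSum_node G w node hnode k j
  let h : InnerVx node → ℝ := fun u => H u.val
  let b : InnerVx node → ℝ := fun u => lapMatrix' G w u.val (node j)
  -- Harmonicity of `H`, with its boundary values moved to the right-hand side.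
  have hK : (innerBlock G w node).mulVec h = -(Z • b) := by
    funext u
    have hu := rootedSum_harmonic (G := G) w (hne u)
      (Finset.mem_image_of_mem node (Finset.mem_univ j))
    rw [← lapMatrix'_mulVec G w H, sum_eq_sum_node_add_sum_inner node hnode] at hu
    simp only [hHnode, mul_ite, mul_zero, Finset.sum_ite_eq', Finset.mem_univ, if_true] at hu
    have he : (innerBlock G w node).mulVec h u =
        ∑ v : InnerVx node, lapMatrix' G w u.val v.val * H v.val := rfl
    rw [he, Pi.neg_apply, Pi.smul_apply, smul_eq_mul]
    linarith
  have hsol : Z • ((innerBlock G w node)⁻¹.mulVec b) = -h := by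
    have hdet := isUnit_det_innerBlock G hG w hw node hnode i
    have := congrArg (innerBlock G w node)⁻¹.mulVec hK
    rw [Matrix.mulVec_mulVec, Matrix.nonsing_inv_mul _ hdet, Matrix.one_mulVec,
      Matrix.mulVec_neg, Matrix.mulVec_smul] at this
    rw [this, neg_neg]
  have hresp : responseMatrix G w node i j = lapMatrix' G w (node i) (node j) -
      ∑ u : InnerVx node, lapMatrix' G w (node i) u.val *
        ((innerBlock G w node)⁻¹.mulVec b) u := by
    simp only [responseMatrix, Matrix.sub_apply, Matrix.mul_assoc, Matrix.of_apply]
    rfl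
  have hoff : ∀ v, node i ≠ v → lapMatrix' G w (node i) v = -conductance G w (node i) v := by
    intro v hv
    simp only [lapMatrix', if_neg hv, conductance]
  rw [Zgrove_pair_eq G w node hnode hij, sum_eq_sum_node_add_sum_inner node hnode, hresp]
  change ∑ k, conductance G w (node i) (node k) * H (node k) +
    ∑ u : InnerVx node, conductance G w (node i) u.val * h u = _
  simp only [hHnode, mul_ite, mul_zero, Finset.sum_ite_eq', Finset.mem_univ, if_true]
  rw [hoff _ (hnode.ne hij), neg_sub, sub_mul, neg_mul, sub_neg_eq_add, add_comm, Finset.sum_mul]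
  congr 1
  refine Finset.sum_congr rfl fun u _ => ?_
  have hu := congrFun hsol u
  rw [Pi.smul_apply, smul_eq_mul, Pi.neg_apply] at hu
  rw [hoff _ (u.2 i), mul_assoc, mul_comm _ Z, hu]
  ring
end
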